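/- arXiv:2402.11915 — 4 statements merged into one kernel-verified Lean document; each statement's English description precedes it below -/
import Mathlib

section
/- Let F be a field, K a field extension of F, n ≥ 1 and d ≥ 0 integers, δ ≥ 0, S a nonempty finite set, and H : S → F^n a function such that for every nonzero polynomial f ∈ F[x_1,…,x_n] of total degree at most d, the number of s ∈ S with f(H(s)) = 0 is at most δ·|S|. Then for every nonzero polynomial g ∈ K[x_1,…,x_n] of total degree at most d, the number of s ∈ S with g(ι(H(s))) = 0 is at most δ·|S|, where ι : F^n → K^n is the coordinatewise inclusion of F into K. -/
open MvPolynomial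

/-!
Applying an `F`-linear functional `φ : K → F` to every coefficient of `g` gives a polynomial over
`F` of no larger degree, whose value at a point of `F^n` is `φ` of the value of `g` there; so it
vanishes at every `F`-rational zero of `g`. As linear functionals separate points, `φ` can be
chosen so that some nonzero coefficient of `g` survives.
-/

section MapCoeffs

variable {σ R A B : Type*} [Semiring R] [CommSemiring A] [CommSemiring B]
  [Module R A] [Module R B]

/-- The polynomial obtained by applying an `R`-linear map to each coefficient. Unlike
`MvPolynomial.map`, it does not require the map to be multiplicative. -/
noncomputable def mapCoeffs (φ : A →ₗ[R] B) (g : MvPolynomial σ A) : MvPolynomial σ B :=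
  AddMonoidAlgebra.map φ.toAddMonoidHom g

theorem coeff_mapCoeffs (φ : A →ₗ[R] B) (g : MvPolynomial σ A) (m : σ →₀ ℕ) :
    coeff m (mapCoeffs φ g) = φ (coeff m g) :=
  rfl

theorem support_mapCoeffs_subset (φ : A →ₗ[R] B) (g : MvPolynomial σ A) :
    (mapCoeffs φ g).support ⊆ g.support :=
  Finsupp.support_mapRange (hf := map_zero φ)

theorem totalDegree_mapCoeffs_le (φ : A →ₗ[R] B) (g : MvPolynomial σ A) :
    (mapCoeffs φ g).totalDegree ≤ g.totalDegree :=
  Finset.sup_mono (support_mapCoeffs_subset φ g)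

theorem mapCoeffs_add (φ : A →ₗ[R] B) (f g : MvPolynomial σ A) :
    mapCoeffs φ (f + g) = mapCoeffs φ f + mapCoeffs φ g :=
  AddMonoidAlgebra.map_add _ f g

theorem mapCoeffs_monomial (φ : A →ₗ[R] B) (m : σ →₀ ℕ) (a : A) :
    mapCoeffs φ (monomial m a) = monomial m (φ a) :=
  AddMonoidAlgebra.map_single _ a m

end MapCoeffs

theorem exists_dual_mapCoeffs_ne_zero {σ R A : Type*} [CommSemiring R] [CommSemiring A]
    [Module R A] [Module.Projective R A] {g : MvPolynomial σ A} (hg : g ≠ 0) :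
    ∃ φ : Module.Dual R A, mapCoeffs φ g ≠ 0 := by
  obtain ⟨m, hm⟩ := ne_zero_iff.mp hg
  obtain ⟨φ, hφ⟩ := Module.Projective.exists_dual_ne_zero R hm
  exact ⟨φ, ne_zero_iff.mpr ⟨m, by rwa [coeff_mapCoeffs]⟩⟩

section Eval

variable {σ R A B : Type*} [CommSemiring R] [CommSemiring A] [CommSemiring B]
  [Algebra R A] [Algebra R B]

theorem eval_algebraMap_monomial (x : σ → R) (m : σ →₀ ℕ) (a : A) :
    eval (fun i => algebraMap R A (x i)) (monomial m a) = (m.prod fun i k => x i ^ k) • a := by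
  simp only [eval_monomial, Finsupp.prod, ← map_pow, ← map_prod, Algebra.smul_def, mul_comm a]

theorem eval_mapCoeffs (φ : A →ₗ[R] B) (g : MvPolynomial σ A) (x : σ → R) :
    eval (fun i => algebraMap R B (x i)) (mapCoeffs φ g) =
      φ (eval (fun i => algebraMap R A (x i)) g) := by
  induction g using MvPolynomial.induction_on' with
  | monomial m a =>
    rw [mapCoeffs_monomial, eval_algebraMap_monomial, eval_algebraMap_monomial, map_smul]
  | add f g hf hg => rw [mapCoeffs_add, map_add, map_add, map_add, hf, hg]

end Eval

/-- `H : S → R^σ` is a hitting set generator of density `1 - δ` for polynomials of total degree at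
most `d`. Probabilities are expressed by counting, so `S` is meant to be finite: `Nat.card` is `0`
on an infinite type. -/
def IsHittingSetGenerator {σ R S : Type*} [CommSemiring R] (d : ℕ) (δ : ℝ) (H : S → σ → R) :
    Prop :=
  ∀ f : MvPolynomial σ R, f ≠ 0 → f.totalDegree ≤ d →
    (Nat.card {s : S // eval (H s) f = 0} : ℝ) ≤ δ * (Nat.card S : ℝ)

theorem hsg_extension_field_general {σ R A S : Type*} [CommSemiring R] [CommSemiring A]
    [Algebra R A] [Module.Projective R A] [Finite S] {d : ℕ} {δ : ℝ} {H : S → σ → R}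
    (hH : IsHittingSetGenerator d δ H) :
    IsHittingSetGenerator d δ fun s i => algebraMap R A (H s i) := by
  intro g hg hdeg
  obtain ⟨φ, hφ⟩ := exists_dual_mapCoeffs_ne_zero (R := R) hg
  have eval_eq (s : S) : eval (H s) (mapCoeffs φ g) =
      φ (eval (fun i => algebraMap R A (H s i)) g) := eval_mapCoeffs φ g (H s)
  have vanishes_of_vanishes (s : S) (hs : eval (fun i => algebraMap R A (H s i)) g = 0) :
      eval (H s) (mapCoeffs φ g) = 0 := by
    rw [eval_eq, hs, map_zero]
  calc (Nat.card {s // eval (fun i => algebraMap R A (H s i)) g = 0} : ℝ)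
      ≤ Nat.card {s // eval (H s) (mapCoeffs φ g) = 0} :=
        mod_cast Nat.card_le_card_of_injective _
          (Subtype.impEmbedding _ _ vanishes_of_vanishes).injective
    _ ≤ δ * Nat.card S := hH _ hφ ((totalDegree_mapCoeffs_le φ g).trans hdeg)

/-- **An HSG over a field `F` is also an HSG over any field extension `K` of `F`.**
If `H : S → F^n` is such that every nonzero `n`-variate polynomial over `F` of total
degree at most `d` vanishes on at most a `δ` fraction of the points `H(s)`, then the same
holds for every nonzero `n`-variate polynomial over `K` of total degree at most `d`,
evaluated at the coordinatewise inclusions of the points `H(s)` into `K`. -/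
theorem hsg_extension_field
    (F K : Type) [Field F] [Field K] [Algebra F K]
    (n d : ℕ) (hn : 1 ≤ n) (δ : ℝ) (hδ : 0 ≤ δ)
    (S : Type) [Finite S] [Nonempty S] (H : S → Fin n → F)
    (hH : ∀ f : MvPolynomial (Fin n) F, f ≠ 0 → f.totalDegree ≤ d →
      (Nat.card {s : S // eval (H s) f = 0} : ℝ) ≤ δ * (Nat.card S : ℝ)) :
    ∀ g : MvPolynomial (Fin n) K, g ≠ 0 → g.totalDegree ≤ d →
      (Nat.card {s : S // eval (fun i => algebraMap F K (H s i)) g = 0} : ℝ)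
        ≤ δ * (Nat.card S : ℝ) :=
  hsg_extension_field_general hH
end

section
/- Let q be a prime power, n ≥ 1, and let f ∈ 𝔽_q[x_1,…,x_n] be a non-constant polynomial that is indecomposable over 𝔽_q. Then f, viewed as a polynomial with coefficients in an algebraic closure 𝔽̄_q of 𝔽_q, is indecomposable over 𝔽̄_q. -/
open MvPolynomial

/-- A non-constant polynomial `f ∈ F[x₁,…,xₙ]` is *decomposable* over `F` if
`f = g(h)` for some univariate `g ∈ F[z]` with `deg g ≥ 2` and some
`h ∈ F[x₁,…,xₙ]`. -/
def MvPolynomial.Decomposable {F : Type*} [CommSemiring F] {n : ℕ}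
    (f : MvPolynomial (Fin n) F) : Prop :=
  ∃ (g : Polynomial F) (h : MvPolynomial (Fin n) F),
    2 ≤ g.natDegree ∧ f = Polynomial.aeval h g

/-!
Let `K` be a field and `f ∈ K[x₁,…,xₙ]` non-constant. Every right component `h` of `f` (`f = g(h)`)
is integral over `K[f]`, so it lies in the integral closure `A` of `K[f]` in `K[x₁,…,xₙ]`.
Substituting suitable one-variable polynomials for the `xᵢ` embeds `A` into `K[T]`. If `w ∈ A` is a
non-constant coefficient, scaled to be monic in `T`, of the minimal polynomial of `T` over `A`, then
comparing degrees shows that this minimal polynomial is `w(X) - w`, and division by it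
gives `A = K[w]`. So all right components of `f` are polynomials in the single `w`.

If `f` has coefficients in `F` and `K/F` is Galois, the conjugates of `w` have the same property, so
they are affine functions of `w`. Normalising two coefficients of `w` makes it Galois invariant,
hence defined over `F`, and then so is the outer polynomial in `f = g(w)`.
-/

section

open Polynomial

theorem isIntegral_of_aeval_eq_algebraMap {K A B : Type*} [Field K] [CommRing A] [Nontrivial A]
    [CommRing B] [Algebra K A] [Algebra A B] [Algebra K B] [IsScalarTower K A B] {g : K[X]}
    (hg : 0 < g.natDegree) {a : A} {b : B} (h : Polynomial.aeval b g = algebraMap A B a) :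
    IsIntegral A b := by
  have hg0 : g ≠ 0 := ne_zero_of_natDegree_gt hg
  have hmonic : (g * Polynomial.C g.leadingCoeff⁻¹).Monic := monic_mul_leadingCoeff_inv hg0
  refine IsIntegral.of_aeval_monic (hmonic.map (algebraMap K A)) ?_ ?_
  · rw [natDegree_map, natDegree_mul_leadingCoeff_self_inv]
    exact hg.ne'
  · rw [Polynomial.aeval_map_algebraMap, map_mul, h, Polynomial.aeval_C,
      IsScalarTower.algebraMap_apply K A B]
    exact isIntegral_algebraMap.mul isIntegral_algebraMap

theorem coeff_coeff_bivariateSwap {R : Type*} [CommSemiring R] (P : R[X][X]) (i j : ℕ) :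
    ((Bivariate.swap P).coeff i).coeff j = (P.coeff j).coeff i := by
  induction P using Polynomial.induction_on' with
  | add P Q hP hQ => simp only [map_add, Polynomial.coeff_add, hP, hQ]
  | monomial n p =>
    rw [Bivariate.swap_monomial, Polynomial.coeff_mul_C, Polynomial.coeff_map,
      Polynomial.coeff_C_mul, Polynomial.coeff_X_pow, Polynomial.coeff_monomial]
    aesop

theorem monic_map_sub_C {R S : Type*} [Ring R] [Ring S] [Nontrivial S] (φ : R →+* S) {p : R[X]}
    (hp : p.Monic) (hdeg : 0 < p.natDegree) (s : S) : (p.map φ - Polynomial.C s).Monic := by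
  refine (hp.map φ).sub_of_left ?_
  rw [hp.degree_map]
  exact degree_C_le.trans_lt (natDegree_pos_iff_degree_pos.mp hdeg)

theorem natDegree_coeff_le_natDegree_swap {R : Type*} [CommSemiring R] (P : R[X][X]) (j : ℕ) :
    (P.coeff j).natDegree ≤ (Bivariate.swap P).natDegree :=
  natDegree_le_iff_coeff_eq_zero.mpr fun i hi ↦ by
    rw [← coeff_coeff_bivariateSwap, coeff_eq_zero_of_natDegree_lt hi, Polynomial.coeff_zero]

-- Comparing degrees in the inner variable shows that the cofactor of `M` is constant.
theorem eq_map_C_sub_C_of_dvd {R : Type*} [CommRing R] [IsDomain R] {w : R[X]} (hw : w.Monic)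
    (hw0 : 0 < w.natDegree) {M : R[X][X]} (hM : M.Monic)
    (hdvd : M ∣ w.map Polynomial.C - Polynomial.C w) {j : ℕ}
    (hj : w.natDegree ≤ (M.coeff j).natDegree) :
    M = w.map Polynomial.C - Polynomial.C w := by
  have hmonic : (w.map Polynomial.C - Polynomial.C w).Monic :=
    monic_map_sub_C Polynomial.C hw hw0 w
  obtain ⟨Q, hQ⟩ := hdvd
  have hQmonic : Q.Monic := hM.of_mul_monic_left (hQ ▸ hmonic)
  have hswap : Bivariate.swap M * Bivariate.swap Q
      = -(w.map Polynomial.C - Polynomial.C w) := by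
    rw [← map_mul, ← hQ, map_sub, Bivariate.swap_map_C, Bivariate.swap_C, neg_sub]
  have hswapQ : (Bivariate.swap Q).natDegree = 0 := by
    have := congrArg natDegree hswap
    have hMj := hj.trans (natDegree_coeff_le_natDegree_swap M j)
    rw [natDegree_mul (by simpa using hM.ne_zero) (by simpa using hQmonic.ne_zero), natDegree_neg,
      natDegree_sub_C, hw.natDegree_map] at this
    omega
  have hunit : IsUnit (Bivariate.swap Q).leadingCoeff := by
    refine .of_mul_eq_one_right (-(Bivariate.swap M).leadingCoeff) ?_
    rw [neg_mul, ← leadingCoeff_mul, hswap, leadingCoeff_neg, hmonic.leadingCoeff, neg_neg]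
  have hQunit : IsUnit (Bivariate.swap Q) := by
    rw [eq_C_of_natDegree_eq_zero hswapQ, ← hswapQ]
    exact hunit.map Polynomial.C
  rw [hQ, hQmonic.eq_one_of_isUnit ((MulEquiv.isUnit_map _).mp hQunit), mul_one]

end

section

open Polynomial

variable {F A : Type*} [Field F] [CommRing A] [Algebra A F[X]]

theorem exists_natDegree_coeff_minpoly_X_pos (hX : IsIntegral A (Polynomial.X : F[X])) :
    ∃ j, 0 < (algebraMap A F[X] ((minpoly A (Polynomial.X : F[X])).coeff j)).natDegree := by
  by_contra! hconst
  set M := (minpoly A (Polynomial.X : F[X])).map (algebraMap A F[X]) with hM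
  have hlifts : M ∈ Polynomial.lifts (Polynomial.C : F →+* F[X]) :=
    (Polynomial.lifts_iff_coeff_lifts M).mpr fun j ↦ by
      rw [hM, Polynomial.coeff_map, eq_C_of_natDegree_le_zero (hconst j)]
      exact Set.mem_range_self _
  obtain ⟨p, hp, -, hp_monic⟩ :=
    Polynomial.lifts_and_natDegree_eq_and_monic hlifts ((minpoly.monic hX).map _)
  refine Polynomial.transcendental_X F ⟨p, hp_monic.ne_zero, ?_⟩
  rw [Polynomial.aeval_def, Polynomial.algebraMap_eq, ← Polynomial.eval_map, hp, hM,
    Polynomial.eval_map, ← Polynomial.aeval_def, minpoly.aeval]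

variable [IsDomain A] [IsIntegrallyClosed A] [Algebra F A] [IsScalarTower F A F[X]]
  [FaithfulSMul A F[X]]

theorem minpoly_X_dvd (hX : IsIntegral A (Polynomial.X : F[X])) (v : A) :
    minpoly A (Polynomial.X : F[X]) ∣
      (algebraMap A F[X] v).map (algebraMap F A) - Polynomial.C v := by
  refine minpoly.isIntegrallyClosed_dvd hX ?_
  rw [map_sub, Polynomial.aeval_map_algebraMap, Polynomial.aeval_X_left_apply, Polynomial.aeval_C,
    sub_self]

theorem exists_minpoly_X_eq (hX : IsIntegral A (Polynomial.X : F[X])) :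
    ∃ w : A, (algebraMap A F[X] w).Monic ∧ 0 < (algebraMap A F[X] w).natDegree ∧
      minpoly A (Polynomial.X : F[X]) =
        (algebraMap A F[X] w).map (algebraMap F A) - Polynomial.C w := by
  obtain ⟨j, hj⟩ := exists_natDegree_coeff_minpoly_X_pos hX
  set M := minpoly A (Polynomial.X : F[X])
  set u := algebraMap A F[X] (M.coeff j)
  set w := algebraMap F A u.leadingCoeff⁻¹ * M.coeff j with w_def
  have hw : algebraMap A F[X] w = u * Polynomial.C u.leadingCoeff⁻¹ := by
    rw [w_def, map_mul, ← IsScalarTower.algebraMap_apply, mul_comm, Polynomial.algebraMap_eq]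
  have hw_deg : (algebraMap A F[X] w).natDegree = u.natDegree := by
    rw [hw, natDegree_mul_leadingCoeff_self_inv]
  have hw_pos : 0 < (algebraMap A F[X] w).natDegree := hw_deg ▸ hj
  have hw_monic : (algebraMap A F[X] w).Monic :=
    hw ▸ monic_mul_leadingCoeff_inv (ne_zero_of_natDegree_gt hj)
  refine ⟨w, hw_monic, hw_pos, Polynomial.map_injective _
    (FaithfulSMul.algebraMap_injective A F[X]) ?_⟩
  have hmap : ((algebraMap A F[X] w).map (algebraMap F A) - Polynomial.C w).map (algebraMap A F[X])
      = (algebraMap A F[X] w).map Polynomial.C - Polynomial.C (algebraMap A F[X] w) := by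
    rw [Polynomial.map_sub, Polynomial.map_map, ← IsScalarTower.algebraMap_eq, Polynomial.map_C,
      Polynomial.algebraMap_eq]
  rw [hmap]
  refine eq_map_C_sub_C_of_dvd hw_monic hw_pos ((minpoly.monic hX).map _)
    (hmap ▸ Polynomial.map_dvd _ (minpoly_X_dvd hX w)) (j := j) ?_
  rw [hw_deg, Polynomial.coeff_map]

-- `v` is the remainder of `v(T)` modulo `w(T) - w`, hence the image under `Y ↦ w` of the remainder
-- of `v(T)` modulo `w(T) - Y`.
theorem exists_adjoin_singleton_eq_top (hX : IsIntegral A (Polynomial.X : F[X])) :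
    ∃ w : A, Algebra.adjoin F {w} = ⊤ := by
  obtain ⟨w, hw_monic, hw_pos, hM⟩ := exists_minpoly_X_eq hX
  set W := algebraMap A F[X] w
  refine ⟨w, Algebra.eq_top_iff.mpr fun v ↦ ?_⟩
  set V := algebraMap A F[X] v
  set M := minpoly A (Polynomial.X : F[X])
  have hmod : V.map (algebraMap F A) %ₘ M = Polynomial.C v := by
    obtain ⟨Q, hQ⟩ := minpoly_X_dvd hX v
    exact (div_modByMonic_unique Q _ (minpoly.monic hX)
      ⟨by rw [← hQ, add_sub_cancel], degree_C_le.trans_lt (minpoly.degree_pos hX)⟩).2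
  set M₀ : F[X][X] := W.map Polynomial.C - Polynomial.C Polynomial.X
  have hM₀ : M₀.Monic := monic_map_sub_C Polynomial.C hw_monic hw_pos _
  set ρ : F[X] →+* A := (Polynomial.aeval w : F[X] →ₐ[F] A).toRingHom
  have hρ (P : F[X]) : (P.map Polynomial.C).map ρ = P.map (algebraMap F A) := by
    rw [Polynomial.map_map]
    congr 1
    ext x
    simp [ρ]
  have hMM₀ : M₀.map ρ = M := by
    rw [hM, Polynomial.map_sub, hρ, Polynomial.map_C]
    simp [ρ]
  have : v = Polynomial.aeval w ((V.map Polynomial.C %ₘ M₀).coeff 0) := by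
    calc v = (V.map (algebraMap F A) %ₘ M).coeff 0 := by rw [hmod, Polynomial.coeff_C_zero]
      _ = ((V.map Polynomial.C %ₘ M₀).map ρ).coeff 0 := by rw [map_modByMonic _ hM₀, hρ, hMM₀]
      _ = _ := by rw [Polynomial.coeff_map]; rfl
  rw [this]
  exact Polynomial.aeval_mem_adjoin_singleton F w

end

section

open Polynomial

theorem exists_restrictScalars_integralClosure_eq_adjoin {F B : Type*} [Field F] [CommRing B]
    [IsDomain B] [IsIntegrallyClosed B] [Algebra F B] (S : Subalgebra F B) (φ : B →ₐ[F] F[X])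
    (hφ : Set.InjOn φ S) {a : B} (ha : a ∈ S) (hdeg : 0 < (φ a).natDegree) :
    ∃ w : B, (integralClosure S B).restrictScalars F = Algebra.adjoin F {w} := by
  let A := integralClosure S B
  have : IsIntegrallyClosed A := .of_isIntegrallyClosed_of_isIntegrallyClosedIn A B
  let ψ : A →ₐ[F] F[X] := φ.comp (A.val.restrictScalars F)
  let _ : Algebra A F[X] := ψ.toAlgebra
  have : IsScalarTower F A F[X] := .of_algebraMap_eq fun x ↦ (ψ.commutes x).symm
  have hψ : Function.Injective ψ := by
    refine (RingHom.injective_iff_ker_eq_bot ψ).mpr (Ideal.eq_bot_of_comap_eq_bot (R := S) ?_)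
    exact (RingHom.injective_iff_ker_eq_bot (φ.comp S.val)).mp hφ.injective
  have : FaithfulSMul A F[X] := (faithfulSMul_iff_algebraMap_injective A F[X]).mpr hψ
  have hX : IsIntegral A (Polynomial.X : F[X]) :=
    isIntegral_of_aeval_eq_algebraMap hdeg
      (a := (⟨a, isIntegral_algebraMap (x := (⟨a, ha⟩ : S))⟩ : A)) (Polynomial.aeval_X_left_apply _)
  obtain ⟨w, hw⟩ := exists_adjoin_singleton_eq_top hX
  refine ⟨w, ?_⟩
  calc A.restrictScalars F = (⊤ : Subalgebra F A).map (A.val.restrictScalars F) := by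
        rw [Algebra.map_top]; ext; simp
    _ = Algebra.adjoin F {A.val w} := by
        rw [← hw, AlgHom.map_adjoin, Set.image_singleton]; rfl

end

section

variable {σ R : Type*}

theorem coeff_zero_aeval_X_mul [CommSemiring R] (f : MvPolynomial σ R) (p : σ → Polynomial R) :
    (MvPolynomial.aeval (fun i ↦ Polynomial.X * p i) f).coeff 0 = coeff 0 f := by
  have : (Polynomial.aeval (0 : R)).comp (MvPolynomial.aeval fun i ↦ Polynomial.X * p i) =
      MvPolynomial.aeval 0 := by
    ext i
    simp
  rw [Polynomial.coeff_zero_eq_aeval_zero, ← AlgHom.comp_apply, this, MvPolynomial.aeval_zero,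
    constantCoeff_eq, Algebra.algebraMap_self_apply]

theorem exists_algHom_natDegree_pos [CommRing R] [IsDomain R] {f : MvPolynomial σ R}
    (hf : 0 < f.totalDegree) : ∃ φ : MvPolynomial σ R →ₐ[R] Polynomial R, 0 < (φ f).natDegree := by
  by_contra! hconst
  have hmap : map Polynomial.C f = map Polynomial.C (C (coeff 0 f)) := by
    refine MvPolynomial.funext_set (fun _ ↦ Set.range (Polynomial.X * ·))
      (fun _ ↦ Set.infinite_range_of_injective (mul_right_injective₀ Polynomial.X_ne_zero)) ?_
    intro x hx
    choose p hp using fun i ↦ hx i (Set.mem_univ i)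
    obtain rfl : (fun i ↦ Polynomial.X * p i) = x := funext hp
    have := Polynomial.eq_C_of_natDegree_le_zero
      (hconst (MvPolynomial.aeval fun i ↦ Polynomial.X * p i))
    rw [coeff_zero_aeval_X_mul, MvPolynomial.aeval_def] at this
    rw [map_C, eval_C, eval_map, ← this]
    rfl
  rw [MvPolynomial.map_injective _ Polynomial.C_injective hmap, totalDegree_C] at hf
  exact hf.false

end

theorem map_polynomial_aeval {σ R S : Type*} [CommSemiring R] [CommSemiring S] (φ : R →+* S)
    (h : MvPolynomial σ R) (g : Polynomial R) :
    map φ (Polynomial.aeval h g) = Polynomial.aeval (map φ h) (g.map φ) := by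
  refine Polynomial.map_aeval_eq_aeval_map ?_ g h
  ext
  simp [MvPolynomial.algebraMap_eq]

theorem totalDegree_map_of_injective {σ R S : Type*} [CommSemiring R] [CommSemiring S] {φ : R →+* S}
    (hφ : Function.Injective φ) (p : MvPolynomial σ R) :
    (map φ p).totalDegree = p.totalDegree := by
  rw [totalDegree, totalDegree, support_map_of_injective p hφ]

section

variable {σ R : Type*} [CommRing R] [IsDomain R]

theorem totalDegree_aeval (h : MvPolynomial σ R) (g : Polynomial R) :
    (Polynomial.aeval h g).totalDegree = g.natDegree * h.totalDegree := by
  rcases Nat.eq_zero_or_pos h.totalDegree with h0 | hpos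
  · rw [totalDegree_eq_zero_iff_eq_C.mp h0, totalDegree_C, mul_zero, ← MvPolynomial.algebraMap_eq,
      Polynomial.aeval_algebraMap_apply, MvPolynomial.algebraMap_eq, totalDegree_C]
  rcases Nat.eq_zero_or_pos g.natDegree with hg0 | hg
  · rw [hg0, Polynomial.eq_C_of_natDegree_eq_zero hg0, Polynomial.aeval_C,
      MvPolynomial.algebraMap_eq, totalDegree_C, zero_mul]
  have hh : h ≠ 0 := by rintro rfl; simp at hpos
  refine Polynomial.degree_pos_induction_on g (Polynomial.natDegree_pos_iff_degree_pos.mp hg)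
    (fun {a} ha ↦ ?_) (fun {p} hp ih ↦ ?_) fun {p a} hp ih ↦ ?_
  · rw [map_mul, Polynomial.aeval_C, Polynomial.aeval_X, MvPolynomial.algebraMap_eq,
      totalDegree_mul_of_isDomain (C_ne_zero.mpr ha) hh, totalDegree_C,
      Polynomial.natDegree_C_mul_X a ha, zero_add, one_mul]
  · have hp0 : Polynomial.aeval h p ≠ 0 := fun h0 ↦ by
      rw [h0, totalDegree_zero, eq_comm, Nat.mul_eq_zero] at ih
      exact ih.elim (Polynomial.natDegree_pos_iff_degree_pos.mpr hp).ne' hpos.ne'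
    rw [map_mul, Polynomial.aeval_X, totalDegree_mul_of_isDomain hp0 hh, ih,
      Polynomial.natDegree_mul_X (Polynomial.ne_zero_of_degree_gt hp), add_one_mul]
  · have hlt : (Polynomial.aeval h (Polynomial.C a)).totalDegree
        < (Polynomial.aeval h p).totalDegree := by
      rw [ih, Polynomial.aeval_C, MvPolynomial.algebraMap_eq, totalDegree_C]
      exact Nat.mul_pos (Polynomial.natDegree_pos_iff_degree_pos.mpr hp) hpos
    rw [map_add, totalDegree_add_eq_left_of_totalDegree_lt hlt, ih, Polynomial.natDegree_add_C]

theorem transcendental_of_totalDegree_pos {h : MvPolynomial σ R} (hpos : 0 < h.totalDegree) :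
    Transcendental R h := by
  refine transcendental_iff.mpr fun g hg ↦ ?_
  have hdeg : g.natDegree = 0 := by
    have := totalDegree_aeval h g
    rw [hg, totalDegree_zero] at this
    exact (Nat.mul_eq_zero.mp this.symm).resolve_right hpos.ne'
  rw [Polynomial.eq_C_of_natDegree_eq_zero hdeg] at hg ⊢
  simpa [MvPolynomial.algebraMap_eq] using hg

end

theorem totalDegree_pos_iff_exists_coeff_ne_zero {σ R : Type*} [CommSemiring R]
    {p : MvPolynomial σ R} : 0 < p.totalDegree ↔ ∃ m ≠ 0, coeff m p ≠ 0 := by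
  rw [Nat.pos_iff_ne_zero, ne_eq, totalDegree_eq_zero_iff_eq_C, MvPolynomial.ext_iff, not_forall]
  refine exists_congr fun m ↦ ?_
  rcases eq_or_ne m 0 with rfl | hm
  · simp
  · simp [coeff_C_of_ne_zero hm, hm]

/-- `h` is a right component of `f` if `f = g(h)` for some univariate `g`. Only constant `g` are
excluded, so that every `f` is a right component of itself. -/
def IsRightComponent {σ R : Type*} [CommSemiring R] (h f : MvPolynomial σ R) : Prop :=
  ∃ g : Polynomial R, 0 < g.natDegree ∧ f = Polynomial.aeval h g

namespace IsRightComponent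

variable {σ R S F : Type*}

theorem refl [CommSemiring R] [Nontrivial R] (f : MvPolynomial σ R) : IsRightComponent f f :=
  ⟨Polynomial.X, by simp, by simp⟩

theorem trans [CommRing R] [IsDomain R] {u v w : MvPolynomial σ R} (huv : IsRightComponent u v)
    (hvw : IsRightComponent v w) : IsRightComponent u w := by
  obtain ⟨p, hp, rfl⟩ := huv
  obtain ⟨q, hq, rfl⟩ := hvw
  exact ⟨q.comp p, by rw [Polynomial.natDegree_comp]; positivity, (Polynomial.aeval_comp ..).symm⟩

theorem map_of_injective [CommSemiring R] [CommSemiring S] {φ : R →+* S} (hφ : Function.Injective φ)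
    {h f : MvPolynomial σ R} (hhf : IsRightComponent h f) :
    IsRightComponent (map φ h) (map φ f) := by
  obtain ⟨g, hg, rfl⟩ := hhf
  exact ⟨g.map φ, by rwa [Polynomial.natDegree_map_eq_of_injective hφ], map_polynomial_aeval φ h g⟩

theorem totalDegree_le [CommRing R] [IsDomain R] {h f : MvPolynomial σ R}
    (hhf : IsRightComponent h f) : h.totalDegree ≤ f.totalDegree := by
  obtain ⟨g, hg, rfl⟩ := hhf
  rw [totalDegree_aeval]
  exact Nat.le_mul_of_pos_left _ hg

theorem totalDegree_pos [CommRing R] [IsDomain R] {h f : MvPolynomial σ R}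
    (hhf : IsRightComponent h f) (hf : 0 < f.totalDegree) : 0 < h.totalDegree := by
  obtain ⟨g, -, rfl⟩ := hhf
  rw [totalDegree_aeval] at hf
  exact Nat.pos_of_mul_pos_left hf

theorem isIntegral [Field F] {h f : MvPolynomial σ F} (hhf : IsRightComponent h f) :
    IsIntegral (Algebra.adjoin F {f}) h := by
  obtain ⟨g, hg, hf⟩ := hhf
  exact isIntegral_of_aeval_eq_algebraMap hg
    (a := (⟨f, Algebra.self_mem_adjoin_singleton F f⟩ : Algebra.adjoin F {f})) hf.symm

-- Mutual right components have equal total degree, so each is an affine function of the other.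
theorem eq_of_coeff_eq [CommRing R] [IsDomain R] {v w : MvPolynomial σ R}
    (hvw : IsRightComponent v w) (hwv : IsRightComponent w v) {m : σ →₀ ℕ} (hv0 : coeff 0 v = 0)
    (hw0 : coeff 0 w = 0) (hvm : coeff m v = 1) (hwm : coeff m w = 1) : v = w := by
  have hm : m ≠ 0 := by rintro rfl; simp [hv0] at hvm
  have hv_pos : 0 < v.totalDegree :=
    totalDegree_pos_iff_exists_coeff_ne_zero.mpr ⟨m, hm, by simp [hvm]⟩
  have hdeg := hwv.totalDegree_le
  obtain ⟨g, -, rfl⟩ := hvw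
  rw [totalDegree_aeval, mul_le_iff_le_one_left hv_pos] at hdeg
  obtain ⟨a, b, rfl⟩ := Polynomial.exists_eq_X_add_C_of_natDegree_le_one hdeg
  simp only [map_add, map_mul, Polynomial.aeval_C, Polynomial.aeval_X, MvPolynomial.algebraMap_eq,
    coeff_add, coeff_C_mul, coeff_zero_C, coeff_C_of_ne_zero hm, hv0, hvm, mul_zero, zero_add,
    mul_one, add_zero] at hw0 hwm ⊢
  rw [hw0, hwm, C_0, C_1, one_mul, add_zero]

end IsRightComponent

section

variable {σ F : Type*} [Field F]

theorem exists_normalized_isRightComponent {w : MvPolynomial σ F} (hw : 0 < w.totalDegree) :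
    ∃ v m, IsRightComponent v w ∧ coeff 0 v = 0 ∧ coeff m v = 1 := by
  obtain ⟨m, hm, hwm⟩ := totalDegree_pos_iff_exists_coeff_ne_zero.mp hw
  refine ⟨C (coeff m w)⁻¹ * (w - C (coeff 0 w)), m,
    ⟨Polynomial.C (coeff m w) * Polynomial.X + Polynomial.C (coeff 0 w), ?_, ?_⟩, ?_, ?_⟩
  · rw [Polynomial.natDegree_linear hwm]; exact one_pos
  · rw [map_add, map_mul, Polynomial.aeval_X, Polynomial.aeval_C, Polynomial.aeval_C,
      MvPolynomial.algebraMap_eq, ← mul_assoc, ← C_mul, mul_inv_cancel₀ hwm, C_1, one_mul,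
      sub_add_cancel]
  · simp
  · simp [coeff_C_of_ne_zero hm, hwm]

theorem exists_least_isRightComponent {f : MvPolynomial σ F} (hf : 0 < f.totalDegree) :
    ∃ w, ∀ h, IsRightComponent h f → IsRightComponent w h := by
  obtain ⟨φ, hφ⟩ := exists_algHom_natDegree_pos hf
  have hinj : Set.InjOn φ (Algebra.adjoin F {f}) := by
    rintro x hx y hy hxy
    obtain ⟨p, rfl⟩ := Algebra.adjoin_mem_exists_aeval F f hx
    obtain ⟨q, rfl⟩ := Algebra.adjoin_mem_exists_aeval F f hy
    rw [← Polynomial.aeval_algHom_apply, ← Polynomial.aeval_algHom_apply] at hxy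
    have htr : Transcendental F (φ f) := Polynomial.transcendental _ hφ.ne' <|
      mem_nonZeroDivisors_of_ne_zero <|
        Polynomial.leadingCoeff_ne_zero.mpr (Polynomial.ne_zero_of_natDegree_gt hφ)
    rw [transcendental_iff_injective.mp htr hxy]
  obtain ⟨w, hw⟩ := exists_restrictScalars_integralClosure_eq_adjoin _ φ hinj
    (Algebra.self_mem_adjoin_singleton F f) hφ
  refine ⟨w, fun h hhf ↦ ?_⟩
  have hmem : h ∈ Algebra.adjoin F {w} := hw ▸ hhf.isIntegral
  obtain ⟨g, rfl⟩ := Algebra.adjoin_mem_exists_aeval F w hmem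
  have := hhf.totalDegree_pos hf
  rw [totalDegree_aeval] at this
  exact ⟨g, Nat.pos_of_mul_pos_right this, rfl⟩

theorem exists_normalized_least_isRightComponent {f : MvPolynomial σ F} (hf : 0 < f.totalDegree) :
    ∃ v m, coeff 0 v = 0 ∧ coeff m v = 1 ∧ ∀ h, IsRightComponent h f → IsRightComponent v h := by
  obtain ⟨w, hw⟩ := exists_least_isRightComponent hf
  obtain ⟨v, m, hvw, hv0, hvm⟩ :=
    exists_normalized_isRightComponent ((hw f (.refl f)).totalDegree_pos hf)
  exact ⟨v, m, hv0, hvm, fun h hh ↦ hvw.trans (hw h hh)⟩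

end

section

variable {σ F K : Type*} [Field F] [Field K] [Algebra F K]

theorem map_map_algebraMap (s : Gal(K/F)) (f : MvPolynomial σ F) :
    map (s : K →+* K) (map (algebraMap F K) f) = map (algebraMap F K) f := by
  rw [map_map]
  congr 2
  ext a
  exact s.commutes a

variable [IsGalois F K]

theorem exists_map_algebraMap_eq {p : MvPolynomial σ K}
    (hp : ∀ s : Gal(K/F), map (s : K →+* K) p = p) : ∃ p₀, map (algebraMap F K) p₀ = p := by
  refine mem_range_map_iff_coeffs_subset.mpr fun a ha ↦ ?_
  obtain ⟨m, -, rfl⟩ := mem_coeffs_iff.mp ha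
  refine (InfiniteGalois.mem_range_algebraMap_iff_fixed _).mpr fun s ↦ ?_
  conv_rhs => rw [← hp s, coeff_map]
  rfl

theorem exists_polynomial_map_algebraMap_eq {g : Polynomial K}
    (hg : ∀ s : Gal(K/F), g.map (s : K →+* K) = g) :
    ∃ g₀ : Polynomial F, g₀.map (algebraMap F K) = g := by
  refine (Polynomial.mem_map_range (algebraMap F K)).mpr fun n ↦ ?_
  refine (InfiniteGalois.mem_range_algebraMap_iff_fixed _).mpr fun s ↦ ?_
  conv_rhs => rw [← hg s, Polynomial.coeff_map]
  rfl

theorem IsRightComponent.of_map_algebraMap {w f : MvPolynomial σ F} (hf : 0 < f.totalDegree)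
    (hwf : IsRightComponent (map (algebraMap F K) w) (map (algebraMap F K) f)) :
    IsRightComponent w f := by
  have hinj := FaithfulSMul.algebraMap_injective F K
  have hw : 0 < (map (algebraMap F K) w).totalDegree :=
    hwf.totalDegree_pos (by rwa [totalDegree_map_of_injective hinj])
  obtain ⟨g, hg, hgf⟩ := hwf
  obtain ⟨g₀, rfl⟩ : ∃ g₀ : Polynomial F, g₀.map (algebraMap F K) = g := by
    refine exists_polynomial_map_algebraMap_eq fun s ↦ ?_
    refine transcendental_iff_injective.mp (transcendental_of_totalDegree_pos hw) ?_
    rw [← hgf, ← map_map_algebraMap s w, ← map_polynomial_aeval, ← hgf, map_map_algebraMap]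
  rw [← map_polynomial_aeval] at hgf
  exact ⟨g₀, by rwa [Polynomial.natDegree_map] at hg, map_injective _ hinj hgf⟩

theorem exists_least_isRightComponent_map_algebraMap {f : MvPolynomial σ F}
    (hf : 0 < f.totalDegree) :
    ∃ v : MvPolynomial σ F, ∀ h, IsRightComponent h (map (algebraMap F K) f) →
      IsRightComponent (map (algebraMap F K) v) h := by
  rw [← totalDegree_map_of_injective (FaithfulSMul.algebraMap_injective F K)] at hf
  obtain ⟨v, m, hv0, hvm, hv⟩ := exists_normalized_least_isRightComponent hf
  have hconj (s : Gal(K/F)) : IsRightComponent v (map (s : K →+* K) v) := by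
    refine hv _ ?_
    rw [← map_map_algebraMap s f]
    exact (hv _ (.refl _)).map_of_injective s.injective
  obtain ⟨v₀, rfl⟩ : ∃ v₀, map (algebraMap F K) v₀ = v := by
    refine exists_map_algebraMap_eq fun s ↦ ?_
    have hs : map (s : K →+* K) (map ((s⁻¹ : Gal(K/F)) : K →+* K) v) = v := by
      have hcomp : (s : K →+* K).comp ((s⁻¹ : Gal(K/F)) : K →+* K) = .id K :=
        RingHom.ext s.apply_symm_apply
      rw [map_map, hcomp, map_id]
    have hsv : IsRightComponent (map (s : K →+* K) v) v := by
      simpa only [hs] using (hconj s⁻¹).map_of_injective (s : K →+* K).injective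
    refine hsv.eq_of_coeff_eq (m := m) (hconj s) ?_ hv0 ?_ hvm
    · rw [coeff_map, hv0, map_zero]
    · rw [coeff_map, hvm, map_one]
  exact ⟨v₀, hv⟩

end

section

variable {n : ℕ}

theorem decomposable_iff_exists_isRightComponent {R : Type*} [CommRing R] [IsDomain R]
    {f : MvPolynomial (Fin n) R} (hf : 0 < f.totalDegree) :
    f.Decomposable ↔ ∃ h, IsRightComponent h f ∧ h.totalDegree < f.totalDegree := by
  constructor
  · rintro ⟨g, h, hg, hgf⟩
    have hhf : IsRightComponent h f := ⟨g, zero_lt_two.trans_le hg, hgf⟩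
    refine ⟨h, hhf, ?_⟩
    rw [hgf, totalDegree_aeval]
    exact lt_mul_of_one_lt_left (hhf.totalDegree_pos hf) hg
  · rintro ⟨h, ⟨g, -, hgf⟩, hlt⟩
    refine ⟨g, h, ?_, hgf⟩
    rw [hgf, totalDegree_aeval] at hlt
    exact lt_of_mul_lt_mul_right ((one_mul _).trans_lt hlt) (Nat.zero_le _)

theorem decomposable_of_totalDegree_eq_zero {R : Type*} [CommSemiring R] [Nontrivial R]
    {f : MvPolynomial (Fin n) R} (hf : f.totalDegree = 0) : f.Decomposable := by
  refine ⟨Polynomial.X ^ 2 + Polynomial.C (coeff 0 f), 0, ?_, ?_⟩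
  · rw [Polynomial.natDegree_X_pow_add_C]
  · rw [totalDegree_eq_zero_iff_eq_C.mp hf]
    simp [MvPolynomial.algebraMap_eq]

theorem decomposable_map_of_injective {R S : Type*} [CommSemiring R] [CommSemiring S] {φ : R →+* S}
    (hφ : Function.Injective φ) {f : MvPolynomial (Fin n) R} (hf : f.Decomposable) :
    (map φ f).Decomposable := by
  obtain ⟨g, h, hg, rfl⟩ := hf
  exact ⟨g.map φ, map φ h, by rwa [Polynomial.natDegree_map_eq_of_injective hφ],
    map_polynomial_aeval φ h g⟩

theorem decomposable_of_map_of_isGalois {F K : Type*} [Field F] [Field K] [Algebra F K]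
    [IsGalois F K] {f : MvPolynomial (Fin n) F} (hf : (map (algebraMap F K) f).Decomposable) :
    f.Decomposable := by
  rcases Nat.eq_zero_or_pos f.totalDegree with h0 | hpos
  · exact decomposable_of_totalDegree_eq_zero h0
  have hdeg := totalDegree_map_of_injective (FaithfulSMul.algebraMap_injective F K) (σ := Fin n)
  have hpos' : 0 < (map (algebraMap F K) f).totalDegree := by rwa [hdeg]
  obtain ⟨v₀, hv₀⟩ := exists_least_isRightComponent_map_algebraMap (K := K) hpos
  obtain ⟨h, hhf, hlt⟩ := (decomposable_iff_exists_isRightComponent hpos').mp hf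
  refine (decomposable_iff_exists_isRightComponent hpos).mpr
    ⟨v₀, .of_map_algebraMap hpos (hv₀ _ (.refl _)), ?_⟩
  calc v₀.totalDegree = (map (algebraMap F K) v₀).totalDegree := (hdeg _).symm
    _ ≤ h.totalDegree := (hv₀ h hhf).totalDegree_le
    _ < (map (algebraMap F K) f).totalDegree := hlt
    _ = f.totalDegree := hdeg f

theorem indecomposable_over_algebraicClosure_of_indecomposable_general {F K : Type*} [Field F]
    [Field K] [Algebra F K] [Algebra.IsSeparable F K] {f : MvPolynomial (Fin n) F}
    (hind : ¬ f.Decomposable) : ¬ (map (algebraMap F K) f).Decomposable := by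
  intro hK
  have : IsSepClosure F (SeparableClosure K) := ⟨inferInstance, .trans F K _⟩
  have : IsGalois F (SeparableClosure K) := inferInstance
  refine hind (decomposable_of_map_of_isGalois (K := SeparableClosure K) ?_)
  rw [IsScalarTower.algebraMap_eq F K, ← map_map]
  exact decomposable_map_of_injective (FaithfulSMul.algebraMap_injective K _) hK

end

/-- **Indecomposability over `𝔽_q` implies indecomposability over `𝔽̄_q`.**
If a non-constant polynomial `f` over a finite field `F` (of prime-power size `q`) is
indecomposable over `F`, then `f`, viewed over an algebraic closure of `F`, is
indecomposable over that algebraic closure. -/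
theorem indecomposable_over_algebraicClosure_of_indecomposable
    (F : Type) [Field F] [Fintype F] (n : ℕ) (hn : 1 ≤ n)
    (f : MvPolynomial (Fin n) F) (hf : 0 < f.totalDegree)
    (hind : ¬ f.Decomposable) :
    ¬ (MvPolynomial.map (algebraMap F (AlgebraicClosure F)) f).Decomposable :=
  indecomposable_over_algebraicClosure_of_indecomposable_general hind
end

section
/- Let d ≥ 1 and let F be a field whose characteristic is either zero or greater than d. Let f ∈ F[x_1,…,x_n,y] be a polynomial of total degree d. Then there exists a nonzero polynomial B ∈ F[x_1,…,x_n] of total degree at most d such that for every a = (a_1,…,a_n) ∈ F^n with B(a) ≠ 0, the polynomial s_a(f) − t ∈ F(t)[x_1,…,x_n,y] equals c·g, where c ∈ F is nonzero and g ∈ F(t)[x_1,…,x_n,y] is a polynomial of total degree d satisfying Hypothesis (H) over F(t) (here s_a(f) := f(x_1 + a_1·y, …, x_n + a_n·y, y) and t is a new variable). -/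
open MvPolynomial

/-- The Sylvester matrix of `f` and `g` with respect to degrees `d₁` and `d₂`: the
`(d₁+d₂) × (d₁+d₂)` matrix whose first `d₂` columns are the shifted coefficient vectors
of `f` and whose last `d₁` columns are the shifted coefficient vectors of `g`. -/
def sylvesterMatrix {R : Type*} [CommRing R] (d₁ d₂ : ℕ) (f g : Polynomial R) :
    Matrix (Fin (d₁ + d₂)) (Fin (d₁ + d₂)) R :=
  Matrix.of fun i j =>
    if (j : ℕ) < d₂ then
      (if (j : ℕ) ≤ (i : ℕ) then f.coeff ((i : ℕ) - (j : ℕ)) else 0)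
    else
      (if (j : ℕ) - d₂ ≤ (i : ℕ) then g.coeff ((i : ℕ) - ((j : ℕ) - d₂)) else 0)

/-- The resultant of two univariate polynomials `f` and `g`: the determinant of their
Sylvester matrix (taken with respect to their degrees). -/
noncomputable def resultant {R : Type*} [CommRing R] (f g : Polynomial R) : R :=
  (sylvesterMatrix f.natDegree g.natDegree f g).det

/-- The `K`-algebra map `K[x₁,…,xₙ,y] → K[y]` evaluating at `x₁ = ⋯ = xₙ = 0` (the
variable `y` is encoded as `none`, and `xᵢ` as `some i`), i.e. `f ↦ f(0,…,0,y)`. -/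
noncomputable def atZero {K : Type*} [CommSemiring K] {n : ℕ} :
    MvPolynomial (Option (Fin n)) K →ₐ[K] Polynomial K :=
  aeval fun v => v.elim Polynomial.X (fun _ => 0)

/-- `f ∈ K[x₁,…,xₙ,y]` satisfies **Hypothesis (H)** if (1) `f` is monic in `y` and
`deg_y f = deg f`, and (2) `Res(f(0,…,0,y), (∂f/∂y)(0,…,0,y)) ≠ 0`. -/
def SatisfiesHypH {K : Type*} [Field K] {n : ℕ}
    (f : MvPolynomial (Option (Fin n)) K) : Prop :=
  ((optionEquivLeft K (Fin n)) f).Monic ∧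
  ((optionEquivLeft K (Fin n)) f).natDegree = f.totalDegree ∧
  resultant (atZero f) (atZero ((pderiv none) f)) ≠ 0

/-- For `a = (a₁,…,aₙ) ∈ Fⁿ`, the `F`-algebra endomorphism `s_a` of
`F[x₁,…,xₙ,y]` fixing `y` and sending `xᵢ` to `xᵢ + aᵢ·y`. -/
noncomputable def sA {F : Type*} [CommSemiring F] {n : ℕ} (a : Fin n → F) :
    MvPolynomial (Option (Fin n)) F →ₐ[F] MvPolynomial (Option (Fin n)) F :=
  aeval fun v => v.elim (X none) (fun i => X (some i) + C (a i) * X none)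

/-!
The coefficient of `y ^ d` in `f(a y, y)` is `f_d(a, 1)`, where `f_d` is the leading form of `f`, so
`B = f_d(x, 1)` works: when `B(a) ≠ 0`, dividing `s_a(f) - t` by `B(a)` makes it monic in `y` of
degree `d`. Writing `q(y) = f(a y, y)`, a root `α` of `q' ≠ 0` is algebraic over `F`, hence so is
`q(α)`, which therefore differs from `t`. Thus `q - t` is separable, and its resultant with its
derivative is nonzero.
-/

section Resultant

variable {R : Type*} [CommRing R]

lemma sylvesterMatrix_eq_reindex_sylvester {f g : Polynomial R} {m n : ℕ}
    (hf : f.natDegree ≤ m) (hg : g.natDegree ≤ n) :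
    sylvesterMatrix m n f g =
      (Polynomial.sylvester g f n m).reindex
        (finCongr (add_comm n m)) (finCongr (add_comm n m)) := by
  have coeff_shift {p : Polynomial R} {k : ℕ} (hp : p.natDegree ≤ k) (i j : ℕ) :
      (if j ≤ i then p.coeff (i - j) else 0) =
        if i ∈ Set.Icc j (j + k) then p.coeff (i - j) else 0 := by
    have (hlt : j + k < i) : p.coeff (i - j) = 0 :=
      Polynomial.coeff_eq_zero_of_natDegree_lt (by lia)
    grind
  ext i j
  obtain ⟨j, rfl⟩ := (finCongr (add_comm n m)).surjective j
  rw [Matrix.reindex_apply, Matrix.submatrix_apply, Equiv.symm_apply_apply]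
  induction j using Fin.addCases with
  | left j =>
    simpa [sylvesterMatrix, Polynomial.sylvester, -Fin.val_fin_le] using coeff_shift hf i j
  | right j =>
    simpa [sylvesterMatrix, Polynomial.sylvester] using coeff_shift hg i j

lemma resultant_eq_polynomial_resultant_swap (f g : Polynomial R) :
    resultant f g = Polynomial.resultant g f := by
  rw [resultant, sylvesterMatrix_eq_reindex_sylvester le_rfl le_rfl, Matrix.det_reindex_self,
    Polynomial.resultant]

lemma resultant_ne_zero_of_isCoprime [IsDomain R] {f g : Polynomial R} (h : IsCoprime f g) :
    resultant f g ≠ 0 := by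
  rw [resultant_eq_polynomial_resultant_swap]
  exact Polynomial.resultant_ne_zero g f h.symm

end Resultant

section Separable

variable {F K : Type*} [Field F] [Field K] [Algebra F K]

lemma isCoprime_map_sub_C_of_transcendental {t : K} (ht : Transcendental F t)
    (q : Polynomial F) {p : Polynomial F} (hp : p ≠ 0) :
    IsCoprime (q.map (algebraMap F K) - Polynomial.C t) (p.map (algebraMap F K)) := by
  rw [Polynomial.isCoprime_iff_aeval_ne_zero_of_isAlgClosed _ (AlgebraicClosure K)]
  intro α
  by_contra! h
  obtain ⟨hq_root, hp_root⟩ := h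
  rw [Polynomial.aeval_map_algebraMap] at hp_root
  rw [map_sub, Polynomial.aeval_map_algebraMap, Polynomial.aeval_C, sub_eq_zero] at hq_root
  have hα : IsIntegral F α := (show IsAlgebraic F α from ⟨p, hp, hp_root⟩).isIntegral
  have hqα : IsAlgebraic F (Polynomial.aeval α q) :=
    (IsIntegral.of_mem_of_fg _ hα.fg_adjoin_singleton _
      (Polynomial.aeval_mem_adjoin_singleton F α)).isAlgebraic
  rw [hq_root, isAlgebraic_algebraMap_iff (algebraMap K (AlgebraicClosure K)).injective] at hqα
  exact ht hqα

lemma separable_map_sub_C_of_transcendental {t : K} (ht : Transcendental F t)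
    {q : Polynomial F} (hq : Polynomial.derivative q ≠ 0) :
    (q.map (algebraMap F K) - Polynomial.C t).Separable := by
  rw [Polynomial.Separable, Polynomial.derivative_sub, Polynomial.derivative_C, sub_zero,
    Polynomial.derivative_map]
  exact isCoprime_map_sub_C_of_transcendental ht q hq

end Separable

lemma derivative_ne_zero_of_coeff_ne_zero {R : Type*} [Semiring R] [NoZeroDivisors R]
    {q : Polynomial R} {d : ℕ} (hd : (d : R) ≠ 0) (hq : q.coeff d ≠ 0) :
    Polynomial.derivative q ≠ 0 := by
  obtain ⟨k, rfl⟩ : ∃ k, d = k + 1 := Nat.exists_eq_succ_of_ne_zero (by rintro rfl; simp at hd)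
  intro h
  have hk : (Polynomial.derivative q).coeff k = 0 := by rw [h, Polynomial.coeff_zero]
  rw [Polynomial.coeff_derivative] at hk
  exact mul_ne_zero hq (by exact_mod_cast hd) hk

lemma natCast_ne_zero_of_lt_ringChar {R : Type*} [NonAssocSemiring R] {d : ℕ} (hd : 1 ≤ d)
    (hchar : ringChar R = 0 ∨ d < ringChar R) : (d : R) ≠ 0 := by
  rw [Ne, ringChar.spec]
  rcases hchar with hzero | hlt
  · rw [hzero, zero_dvd_iff]
    lia
  · exact Nat.not_dvd_of_pos_of_lt hd hlt

section TotalDegree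

variable {R S σ τ : Type*} [CommSemiring R] [CommSemiring S]

lemma totalDegree_aeval_le {g : σ → MvPolynomial τ R} {k : ℕ}
    (hg : ∀ i, (g i).totalDegree ≤ k) (p : MvPolynomial σ R) :
    (aeval g p).totalDegree ≤ p.totalDegree * k := by
  rw [aeval_def, eval₂_eq, algebraMap_eq]
  refine totalDegree_finsetSum_le fun m hm => ?_
  calc (C (coeff m p) * ∏ i ∈ m.support, g i ^ m i).totalDegree
      ≤ (∏ i ∈ m.support, g i ^ m i).totalDegree :=
        (totalDegree_mul _ _).trans (by rw [totalDegree_C, zero_add])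
    _ ≤ ∑ i ∈ m.support, (g i ^ m i).totalDegree := totalDegree_finsetProd _ _
    _ ≤ ∑ i ∈ m.support, m i * k :=
        Finset.sum_le_sum fun i _ =>
          (totalDegree_pow _ _).trans (Nat.mul_le_mul_left _ (hg i))
    _ = (m.sum fun _ e => e) * k := by rw [Finsupp.sum, Finset.sum_mul]
    _ ≤ p.totalDegree * k := Nat.mul_le_mul_right _ (le_totalDegree hm)

lemma totalDegree_map_le (φ : R →+* S) (p : MvPolynomial σ R) :
    (MvPolynomial.map φ p).totalDegree ≤ p.totalDegree :=
  Finset.sup_mono (support_map_subset φ p)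

lemma homogeneousComponent_totalDegree_ne_zero {p : MvPolynomial σ R} (hp : p ≠ 0) :
    homogeneousComponent p.totalDegree p ≠ 0 := by
  obtain ⟨m, hm, hdeg⟩ :=
    Finset.exists_mem_eq_sup p.support (support_nonempty.mpr hp) fun m => m.degree
  refine ne_zero_iff.mpr ⟨m, ?_⟩
  rw [coeff_homogeneousComponent, if_pos (show m.degree = p.totalDegree from hdeg.symm)]
  exact mem_support_iff.mp hm

lemma coeff_aeval_C_mul_X (b : σ → R) (p : MvPolynomial σ R) (d : ℕ) :
    (aeval (fun i => Polynomial.C (b i) * Polynomial.X) p).coeff d =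
      eval b (homogeneousComponent d p) := by
  induction p using MvPolynomial.induction_on' with
  | monomial m r =>
    have hline : aeval (fun i => Polynomial.C (b i) * Polynomial.X) (monomial m r) =
        Polynomial.monomial m.degree (eval b (monomial m r)) := by
      simp only [aeval_monomial, eval_monomial, Finsupp.prod, mul_pow, Finset.prod_mul_distrib,
        Finset.prod_pow_eq_pow_sum, Polynomial.algebraMap_eq, Finsupp.degree_apply,
        ← Polynomial.C_mul_X_pow_eq_monomial, map_mul, map_prod, map_pow, mul_assoc]
    rw [hline, Polynomial.coeff_monomial]
    split_ifs with hm
    · rw [homogeneousComponent_eq_self (isHomogeneous_monomial r hm)]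
    · rw [homogeneousComponent_of_mem (isHomogeneous_monomial r rfl), if_neg (Ne.symm hm), map_zero]
  | add p q hp hq => simp only [map_add, Polynomial.coeff_add, hp, hq]

end TotalDegree

section Dehomogenize

variable {R σ : Type*} [CommSemiring R]

/-- The specialization `p(x, y) ↦ p(x, 1)`, with the variable `y` encoded as `none`. Applied to the
leading form of `f` and evaluated at `a`, it gives the coefficient of `y ^ deg f` in
`f(x + a y, y)`. -/
noncomputable def dehomogenize : MvPolynomial (Option σ) R →ₐ[R] MvPolynomial σ R :=
  aeval fun v => v.elim 1 X

lemma eval_dehomogenize (a : σ → R) (p : MvPolynomial (Option σ) R) :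
    eval a (dehomogenize p) = eval (fun v => v.elim 1 a) p := by
  have hcomp : (aeval a).comp dehomogenize =
      (aeval fun v => v.elim 1 a : MvPolynomial (Option σ) R →ₐ[R] R) := by
    refine algHom_ext fun v => ?_
    cases v <;> simp [dehomogenize]
  exact DFunLike.congr_fun hcomp p

lemma totalDegree_dehomogenize_le (p : MvPolynomial (Option σ) R) :
    (dehomogenize p).totalDegree ≤ p.totalDegree := by
  refine (totalDegree_aeval_le (k := 1) (fun v => ?_) p).trans_eq (mul_one _)
  cases v with
  | none => simp
  | some i => exact (isHomogeneous_X R i).totalDegree_le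

lemma dehomogenize_monomial (m : Option σ →₀ ℕ) (r : R) :
    dehomogenize (monomial m r) = monomial m.some r := by
  rw [dehomogenize, aeval_monomial, Finsupp.prod_option_index _ _ (by simp) (by simp [pow_add])]
  simp [monomial_eq]

lemma injOn_some_degree_eq (d : ℕ) :
    Set.InjOn Finsupp.some {m : Option σ →₀ ℕ | m.degree = d} := by
  intro m hm k hk hmk
  have degree_split (l : Option σ →₀ ℕ) : l.degree = l none + l.some.degree :=
    Finsupp.sum_option_index l (fun _ e => e) (fun _ => rfl) fun _ _ _ => rfl
  have hnone : m none = k none := by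
    have h : m.degree = k.degree := hm.trans hk.symm
    rw [degree_split, degree_split, hmk] at h
    exact Nat.add_right_cancel h
  rw [← m.optionElim_some, ← k.optionElim_some, hmk, hnone]

lemma coeff_dehomogenize {p : MvPolynomial (Option σ) R} {d : ℕ} (hp : p.IsHomogeneous d)
    {m : Option σ →₀ ℕ} (hm : m.degree = d) :
    coeff m.some (dehomogenize p) = coeff m p := by
  classical
  have hexpand : dehomogenize p = ∑ k ∈ p.support, monomial k.some (coeff k p) := by
    simpa only [map_sum, dehomogenize_monomial] using congrArg dehomogenize p.as_sum
  rw [hexpand, coeff_sum, Finset.sum_eq_single m]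
  · rw [coeff_monomial, if_pos rfl]
  · intro k hk hkm
    have hkd : k.degree = d := (hp.degree_eq_sum_deg_support hk).symm
    rw [coeff_monomial, if_neg fun h => hkm (injOn_some_degree_eq d hkd hm h)]
  · intro hmp
    rw [notMem_support_iff.mp hmp, monomial_zero, coeff_zero]

lemma dehomogenize_ne_zero {p : MvPolynomial (Option σ) R} {d : ℕ} (hp : p.IsHomogeneous d)
    (hp0 : p ≠ 0) : dehomogenize p ≠ 0 := by
  obtain ⟨m, hm⟩ := ne_zero_iff.mp hp0
  have hmd : m.degree = d := (hp.degree_eq_sum_deg_support (mem_support_iff.mpr hm)).symm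
  exact ne_zero_iff.mpr ⟨m.some, by rwa [coeff_dehomogenize hp hmd]⟩

end Dehomogenize

section AtZero

variable {R : Type*} [CommSemiring R] {n : ℕ}

lemma atZero_eq_map_optionEquivLeft (p : MvPolynomial (Option (Fin n)) R) :
    atZero p = (optionEquivLeft R (Fin n) p).map constantCoeff := by
  have hcomp : (atZero : MvPolynomial (Option (Fin n)) R →ₐ[R] Polynomial R).toRingHom =
      (Polynomial.mapRingHom constantCoeff).comp (optionEquivLeft R (Fin n)).toRingHom := by
    refine ringHom_ext (fun r => ?_) fun v => ?_
    · simp [atZero, optionEquivLeft_C]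
    · cases v <;> simp [atZero, optionEquivLeft_X_some, optionEquivLeft_X_none]
  exact DFunLike.congr_fun hcomp p

lemma atZero_map {S : Type*} [CommSemiring S] (φ : R →+* S)
    (p : MvPolynomial (Option (Fin n)) R) :
    atZero (MvPolynomial.map φ p) = (atZero p).map φ := by
  have hcomp : (atZero : _ →ₐ[S] Polynomial S).toRingHom.comp (MvPolynomial.map φ) =
      (Polynomial.mapRingHom φ).comp
        (atZero : MvPolynomial (Option (Fin n)) R →ₐ[R] Polynomial R).toRingHom := by
    refine ringHom_ext (fun r => ?_) fun v => ?_
    · simp [atZero]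
    · cases v <;> simp [atZero]
  exact DFunLike.congr_fun hcomp p

lemma atZero_pderiv_none (p : MvPolynomial (Option (Fin n)) R) :
    atZero (pderiv none p) = Polynomial.derivative (atZero p) := by
  induction p using MvPolynomial.induction_on with
  | C r => simp [atZero]
  | add p q hp hq => simp only [map_add, hp, hq]
  | mul_X p v hp =>
    rw [Derivation.leibniz, map_add, map_mul, smul_eq_mul, smul_eq_mul, map_mul, map_mul,
      Polynomial.derivative_mul, ← hp]
    cases v <;> simp [atZero, pderiv_X, mul_comm, add_comm]

lemma natDegree_optionEquivLeft_le_totalDegree (p : MvPolynomial (Option (Fin n)) R) :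
    (optionEquivLeft R (Fin n) p).natDegree ≤ p.totalDegree := by
  rw [natDegree_optionEquivLeft]
  exact degreeOf_le_totalDegree p none

lemma natDegree_atZero_le_totalDegree (p : MvPolynomial (Option (Fin n)) R) :
    (atZero p).natDegree ≤ p.totalDegree := by
  rw [atZero_eq_map_optionEquivLeft]
  exact Polynomial.natDegree_map_le.trans (natDegree_optionEquivLeft_le_totalDegree p)

lemma totalDegree_eq_of_coeff_atZero_ne_zero {p : MvPolynomial (Option (Fin n)) R} {d : ℕ}
    (hle : p.totalDegree ≤ d) (hd : (atZero p).coeff d ≠ 0) : p.totalDegree = d :=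
  hle.antisymm <|
    (Polynomial.le_natDegree_of_ne_zero hd).trans (natDegree_atZero_le_totalDegree p)

lemma coeff_optionEquivLeft_totalDegree (p : MvPolynomial (Option (Fin n)) R) :
    (optionEquivLeft R (Fin n) p).coeff p.totalDegree =
      C ((atZero p).coeff p.totalDegree) := by
  have hdeg : ((optionEquivLeft R (Fin n) p).coeff p.totalDegree).totalDegree = 0 := by
    have := totalDegree_coeff_optionEquivLeft_add_le R (Fin n) p p.totalDegree le_rfl
    lia
  rw [atZero_eq_map_optionEquivLeft, Polynomial.coeff_map, constantCoeff_eq]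
  exact totalDegree_eq_zero_iff_eq_C.mp hdeg

end AtZero

section LinearChange

variable {R : Type*} [CommSemiring R] {n : ℕ}

lemma totalDegree_sA_le (a : Fin n → R) (p : MvPolynomial (Option (Fin n)) R) :
    (sA a p).totalDegree ≤ p.totalDegree := by
  refine (totalDegree_aeval_le (k := 1) (fun v => ?_) p).trans_eq (mul_one _)
  cases v with
  | none => exact (isHomogeneous_X R none).totalDegree_le
  | some i =>
    exact ((isHomogeneous_X R (some i)).add (isHomogeneous_C_mul_X (a i) none)).totalDegree_le

lemma atZero_sA (a : Fin n → R) (p : MvPolynomial (Option (Fin n)) R) :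
    atZero (sA a p) = aeval (fun v => Polynomial.C (v.elim 1 a) * Polynomial.X) p := by
  have hcomp : atZero.comp (sA a) =
      aeval (R := R) fun v : Option (Fin n) => Polynomial.C (v.elim 1 a) * Polynomial.X := by
    refine algHom_ext fun v => ?_
    cases v <;> simp [atZero, sA]
  exact DFunLike.congr_fun hcomp p

lemma coeff_atZero_sA (a : Fin n → R) (p : MvPolynomial (Option (Fin n)) R) (d : ℕ) :
    (atZero (sA a p)).coeff d = eval a (dehomogenize (homogeneousComponent d p)) := by
  rw [atZero_sA, coeff_aeval_C_mul_X, eval_dehomogenize]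

end LinearChange

section HypothesisH

variable {F K : Type*} [Field F] [Field K] [Algebra F K] {n : ℕ}

lemma satisfiesHypH_of_separable_atZero {g : MvPolynomial (Option (Fin n)) K}
    (hcoeff : (atZero g).coeff g.totalDegree = 1) (hsep : (atZero g).Separable) :
    SatisfiesHypH g := by
  have htop : (optionEquivLeft K (Fin n) g).coeff g.totalDegree = 1 := by
    rw [coeff_optionEquivLeft_totalDegree, hcoeff, C_1]
  have hle := natDegree_optionEquivLeft_le_totalDegree g
  refine ⟨Polynomial.monic_of_natDegree_le_of_coeff_eq_one _ hle htop,
    Polynomial.natDegree_eq_of_le_of_coeff_ne_zero hle (htop ▸ one_ne_zero), ?_⟩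
  rw [atZero_pderiv_none]
  exact resultant_ne_zero_of_isCoprime hsep

lemma exists_satisfiesHypH_map_sub_C_eq {t : K} (ht : Transcendental F t)
    {p : MvPolynomial (Option (Fin n)) F} {d : ℕ} (hp : p.totalDegree ≤ d) (hd : (d : F) ≠ 0)
    (hcoeff : (atZero p).coeff d ≠ 0) :
    ∃ g : MvPolynomial (Option (Fin n)) K, g.totalDegree = d ∧ SatisfiesHypH g ∧
      MvPolynomial.map (algebraMap F K) p - C t =
        C (algebraMap F K ((atZero p).coeff d)) * g := by
  set φ := algebraMap F K
  set c := φ ((atZero p).coeff d)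
  have hc : c ≠ 0 := (map_ne_zero φ).mpr hcoeff
  set g := C c⁻¹ * (MvPolynomial.map φ p - C t)
  have hg_le : g.totalDegree ≤ d := by
    calc g.totalDegree ≤ (MvPolynomial.map φ p - C t).totalDegree :=
          (totalDegree_mul _ _).trans (by rw [totalDegree_C, zero_add])
      _ ≤ (MvPolynomial.map φ p).totalDegree := totalDegree_sub_C_le _ _
      _ ≤ d := (totalDegree_map_le φ p).trans hp
  have hg_atZero : atZero g =
      Polynomial.C c⁻¹ * ((atZero p).map φ - Polynomial.C t) := by
    rw [map_mul, map_sub, atZero_map]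
    simp [atZero]
  have hg_coeff : (atZero g).coeff d = 1 := by
    have hd0 : d ≠ 0 := by rintro rfl; simp at hd
    rw [hg_atZero, Polynomial.coeff_C_mul, Polynomial.coeff_sub, Polynomial.coeff_map,
      Polynomial.coeff_C_of_ne_zero hd0, sub_zero, inv_mul_cancel₀ hc]
  have hg_deg : g.totalDegree = d :=
    totalDegree_eq_of_coeff_atZero_ne_zero hg_le (hg_coeff ▸ one_ne_zero)
  have hg_sep : (atZero g).Separable := by
    rw [hg_atZero]
    exact (separable_map_sub_C_of_transcendental ht
      (derivative_ne_zero_of_coeff_ne_zero hd hcoeff)).unit_mul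
        (Polynomial.isUnit_C.mpr (inv_ne_zero hc).isUnit)
  refine ⟨g, hg_deg, satisfiesHypH_of_separable_atZero (hg_deg ▸ hg_coeff) hg_sep, ?_⟩
  rw [← mul_assoc, ← C_mul, mul_inv_cancel₀ hc, C_1, one_mul]

theorem exists_good_change_to_hypothesis_H_general {t : K} (ht : Transcendental F t)
    (f : MvPolynomial (Option (Fin n)) F) (hf : (f.totalDegree : F) ≠ 0) :
    ∃ B : MvPolynomial (Fin n) F, B ≠ 0 ∧ B.totalDegree ≤ f.totalDegree ∧
      ∀ a : Fin n → F, eval a B ≠ 0 →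
        ∃ (c : F) (g : MvPolynomial (Option (Fin n)) K),
          c ≠ 0 ∧ g.totalDegree = f.totalDegree ∧ SatisfiesHypH g ∧
          MvPolynomial.map (algebraMap F K) (sA a f) - C t = C (algebraMap F K c) * g := by
  set d := f.totalDegree with hd
  have hf0 : f ≠ 0 := by
    rintro rfl
    simp [hd] at hf
  have htop_hom : (homogeneousComponent d f).IsHomogeneous d :=
    homogeneousComponent_isHomogeneous d f
  refine ⟨dehomogenize (homogeneousComponent d f),
    dehomogenize_ne_zero htop_hom (homogeneousComponent_totalDegree_ne_zero hf0),
    (totalDegree_dehomogenize_le _).trans htop_hom.totalDegree_le, fun a ha => ?_⟩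
  rw [← coeff_atZero_sA] at ha
  obtain ⟨g, hg⟩ := exists_satisfiesHypH_map_sub_C_eq ht (totalDegree_sA_le a f) hf ha
  exact ⟨_, g, ha, hg⟩

end HypothesisH

/-- **Reducing to Hypothesis (H).**
Let `d ≥ 1` and let `F` be a field of characteristic zero or greater than `d`, and let
`f ∈ F[x₁,…,xₙ,y]` have total degree `d`. Then there exists a nonzero polynomial
`B ∈ F[x₁,…,xₙ]` of total degree at most `d` such that for every `a ∈ Fⁿ` with
`B(a) ≠ 0`, the polynomial `s_a(f) − t ∈ F(t)[x₁,…,xₙ,y]` equals `c·g` for some nonzero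
`c ∈ F` and some `g ∈ F(t)[x₁,…,xₙ,y]` of total degree `d` satisfying Hypothesis (H). -/
theorem exists_good_change_to_hypothesis_H
    (F : Type) [Field F] (n d : ℕ) (hd : 1 ≤ d)
    (hchar : ringChar F = 0 ∨ d < ringChar F)
    (f : MvPolynomial (Option (Fin n)) F) (hdeg : f.totalDegree = d) :
    ∃ B : MvPolynomial (Fin n) F, B ≠ 0 ∧ B.totalDegree ≤ d ∧
      ∀ a : Fin n → F, eval a B ≠ 0 →
        ∃ (c : F) (g : MvPolynomial (Option (Fin n)) (RatFunc F)),
          c ≠ 0 ∧ g.totalDegree = d ∧ SatisfiesHypH g ∧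
          MvPolynomial.map (algebraMap F (RatFunc F)) (sA a f)
              - MvPolynomial.C RatFunc.X
            = MvPolynomial.C (algebraMap F (RatFunc F) c) * g := by
  subst hdeg
  exact exists_good_change_to_hypothesis_H_general RatFunc.transcendental_X f
    (natCast_ne_zero_of_lt_ringChar hd hchar)
end

section
/- Let d ≥ 1 and let K be an algebraically closed field whose characteristic is either zero or greater than d(d−1). Let f ∈ K[x_1,…,x_n,y] be an irreducible polynomial of total degree d satisfying Hypothesis (H). Set m = 2^{d−1} − 1. Then there exist nonzero polynomials Q_1,…,Q_m ∈ K[z_1,…,z_n], each of total degree at most 2d−1, such that for every a = (a_1,…,a_n) ∈ K^n for which the bivariate polynomial f(a_1·x, …, a_n·x, y) ∈ K[x,y] is not irreducible, there is some i ∈ {1,…,m} with Q_i(a) = 0. -/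
open MvPolynomial

/-- The `K`-algebra map `K[x₁,…,xₙ,y] → K[x,y]` sending `xᵢ ↦ aᵢ·x` and `y ↦ y`,
i.e. `f ↦ f(a₁x, …, aₙx, y)`; in `K[x,y] = MvPolynomial (Fin 2) K`, `x` is `X 0` and
`y` is `X 1`. -/
noncomputable def restrictLine {K : Type*} [CommSemiring K] {n : ℕ} (a : Fin n → K) :
    MvPolynomial (Option (Fin n)) K →ₐ[K] MvPolynomial (Fin 2) K :=
  aeval fun v => v.elim (X 1) (fun i => C (a i) * X 0)

/-!
Restrict `f` to the generic line: `F = f(z₁t, …, zₙt, y)`. By Hypothesis (H) and Hensel's lemma,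
`F = ∏ᵢ (y - φᵢ)` with `φᵢ ∈ K[z]⟦t⟧`, and the coefficient of `tᵏ` in `φᵢ` has degree at most `k`
in `z`. If `f(a₁x, …, aₙx, y)` is reducible, then at `z = a` a factorization groups the branches
into `P = ∏_{i ∈ s} (y - φᵢ)` and `Q = ∏_{i ∉ s} (y - φᵢ)`. The logarithmic differential of `P` is
`(P_y Q dy + t P_t Q dt/t) / F`; at `z = a` its numerators are polynomials of total degree at most
`d - 1` and `d` in `t` and `y`, so `a` is a zero of all the coefficients of terms of larger degree.

For fixed `s`, some such coefficient of a `tᵏ` with `k < 2d` is a nonzero polynomial. Otherwise,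
truncating the numerators to total degrees `d - 1` and `d` changes them only from `t²ᵈ` on, and for
degree reasons the truncated form `(T dy + S dt/t) / F` is exactly closed. Its residue `T / F_y`
along a branch of `P` is then constant up to order `d(d - 1)`, where the characteristic enters, so
it equals `1` to that order. By Bézout `T = F_y`, but `T` vanishes to order `2d` along the branches
of `Q`.

Since `P` and `Q` play symmetric roles, it suffices to consider the `2ᵈ⁻¹ - 1` nonempty sets `s`
that omit one fixed branch.
-/

namespace Bertini

open scoped Polynomial PowerSeries
open Lagrange (nodal nodal_monic natDegree_nodal)

section Derivations

variable {R A : Type*} [CommRing R] [CommRing A] [Algebra R A]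

/-- The derivation `P ↦ P^D` of `A[X]` that applies a derivation `D` of `A` to each coefficient. -/
noncomputable def coeffDerivation (D : Derivation R A A) : Derivation R A[X] A[X] :=
  PolynomialModule.equivPolynomialSelf.toLinearMap.compDer D.mapCoeffs

@[simp]
theorem coeff_coeffDerivation (D : Derivation R A A) (P : A[X]) (j : ℕ) :
    (coeffDerivation D P).coeff j = D (P.coeff j) := rfl

theorem derivative_coeffDerivation (D : Derivation R A A) (P : A[X]) :
    (coeffDerivation D P).derivative = coeffDerivation D P.derivative := by
  ext j
  simp only [Polynomial.coeff_derivative, coeff_coeffDerivation, Derivation.leibniz,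
    ← Nat.cast_succ, Derivation.map_natCast, smul_eq_mul]
  ring

theorem derivation_eval (D : Derivation R A A) (P : A[X]) (a : A) :
    D (P.eval a) = (coeffDerivation D P).eval a + P.derivative.eval a * D a := by
  rw [Derivation.apply_eval_eq, smul_eq_mul]
  congr 1
  have h := PolynomialModule.aeval_equivPolynomial (S := A) (D.mapCoeffs P) a
  rw [Algebra.linearMap_self, PolynomialModule.eval_map'] at h
  exact h.symm

/-- The numerator of the exterior derivative of the differential form `(T dy + S D) / F`, where `D`
acts on the coefficients and `y` is the polynomial variable; the form is closed iff it vanishes. -/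
noncomputable def curl (D : Derivation R A A) (F T S : A[X]) : A[X] :=
  F * coeffDerivation D T - T * coeffDerivation D F - (F * S.derivative - S * F.derivative)

theorem curl_logDeriv (D : Derivation R A A) (P Q : A[X]) :
    curl D (P * Q) (P.derivative * Q) (coeffDerivation D P * Q) = 0 := by
  simp only [curl, Derivation.leibniz, Polynomial.derivative_mul, smul_eq_mul,
    derivative_coeffDerivation]
  ring

theorem curl_sub (D : Derivation R A A) (F T T' S S' : A[X]) :
    curl D F (T - T') (S - S') = curl D F T S - curl D F T' S' := by
  simp only [curl, map_sub]
  ring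

/-- The residue `T(φ) / F'(φ)` of a closed form `(T dy + S D) / F` along a root `φ` of `F` is a
constant of `D`. -/
theorem derivation_residue [IsDomain A] {D : Derivation R A A} {F T S : A[X]}
    (hclosed : curl D F T S = 0) {φ : A} (hφ : F.eval φ = 0)
    (hsimple : F.derivative.eval φ ≠ 0) :
    F.derivative.eval φ * D (T.eval φ) = T.eval φ * D (F.derivative.eval φ) := by
  have hroot : (coeffDerivation D F).eval φ = -(F.derivative.eval φ * D φ) := by
    have h := derivation_eval D F φ
    rw [hφ, map_zero] at h
    linear_combination -h
  have hS : S.eval φ = -(T.eval φ * D φ) := by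
    have h := congrArg (Polynomial.eval φ) hclosed
    simp only [curl, Polynomial.eval_sub, Polynomial.eval_mul, Polynomial.eval_zero, hφ, hroot] at h
    exact mul_left_cancel₀ hsimple (by linear_combination h)
  have h := congrArg (fun P => P.derivative.eval φ) hclosed
  simp only [curl, Polynomial.derivative_sub, Polynomial.derivative_mul, Polynomial.eval_sub,
    Polynomial.eval_add, Polynomial.eval_mul, Polynomial.derivative_zero, Polynomial.eval_zero,
    derivative_coeffDerivation, hφ, hroot, hS] at h
  rw [derivation_eval, derivation_eval]
  linear_combination h

end Derivations

section EulerDerivation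

variable {R : Type*} [CommRing R]

variable (R) in
/-- The Euler derivation `t d/dt` of `R⟦t⟧`, which multiplies the coefficient of `t ^ k` by `k`. -/
noncomputable def eulerDerivation : Derivation R R⟦X⟧ R⟦X⟧ :=
  (PowerSeries.X : R⟦X⟧) • PowerSeries.derivative R

@[simp]
theorem coeff_eulerDerivation (k : ℕ) (φ : R⟦X⟧) :
    PowerSeries.coeff k (eulerDerivation R φ) = k * PowerSeries.coeff k φ := by
  simp only [eulerDerivation, Derivation.smul_apply, smul_eq_mul]
  cases k with
  | zero => simp
  | succ k =>
    rw [PowerSeries.coeff_succ_X_mul, PowerSeries.coeff_derivative, mul_comm, Nat.cast_succ]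

theorem eulerDerivation_X_pow_mul (k : ℕ) (φ : R⟦X⟧) :
    eulerDerivation R (PowerSeries.X ^ k * φ) =
      PowerSeries.X ^ k * (k • φ + eulerDerivation R φ) := by
  ext i
  simp only [coeff_eulerDerivation, PowerSeries.coeff_X_pow_mul', map_add, map_nsmul,
    ← nsmul_eq_mul]
  split_ifs with hki
  · rw [← add_smul, Nat.add_sub_cancel' hki]
  · exact smul_zero i

theorem map_coeffDerivation_eulerDerivation {S : Type*} [CommRing S] (g : R →+* S)
    (P : R⟦X⟧[X]) :
    (coeffDerivation (eulerDerivation R) P).map (PowerSeries.map g) =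
      coeffDerivation (eulerDerivation S) (P.map (PowerSeries.map g)) := by
  ext j k
  simp

/-- The equation says that `δ / w` is a constant of the Euler derivation. Its lowest term is
`k * w₀ * δₖ * t ^ k`, where `k` is the order of `δ`. -/
theorem coeff_eq_zero_of_eulerDerivation_eq [IsDomain R] {w δ : R⟦X⟧} {M : ℕ}
    (hw : PowerSeries.constantCoeff w ≠ 0)
    (hδ : w * eulerDerivation R δ = δ * eulerDerivation R w)
    (hchar : ∀ k ≤ M, (k : R) = 0 → PowerSeries.coeff k δ = 0) :
    ∀ k ≤ M, PowerSeries.coeff k δ = 0 := by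
  intro k
  induction k using Nat.strong_induction_on with
  | _ k ih =>
    intro hkM
    have hdvd : PowerSeries.X ^ k ∣ δ :=
      PowerSeries.X_pow_dvd_iff.2 fun i hi => ih i hi (hi.le.trans hkM)
    obtain ⟨ε, rfl⟩ := hdvd
    rw [eulerDerivation_X_pow_mul] at hδ
    have hcancel : w * (k • ε + eulerDerivation R ε) = ε * eulerDerivation R w :=
      mul_left_cancel₀ (pow_ne_zero k PowerSeries.X_ne_zero) (by linear_combination hδ)
    have hEuler (ψ : R⟦X⟧) : PowerSeries.constantCoeff (eulerDerivation R ψ) = 0 := by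
      rw [← PowerSeries.coeff_zero_eq_constantCoeff_apply, coeff_eulerDerivation, Nat.cast_zero,
        zero_mul]
    have hconst : PowerSeries.constantCoeff w * (k * PowerSeries.constantCoeff ε) = 0 := by
      simpa [hEuler] using congrArg PowerSeries.constantCoeff hcancel
    rcases mul_eq_zero.1 ((mul_eq_zero.1 hconst).resolve_left hw) with hk | hε
    · exact hchar k hkM hk
    · simpa [PowerSeries.coeff_X_pow_mul'] using hε

end EulerDerivation

section TotalDegree

variable {R : Type*} [CommRing R]

variable (R) in
/-- The polynomials in `R⟦t⟧[y]` of total degree at most `N` in `t` and `y`. -/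
def totalDegreeLE (N : ℕ) : Submodule R R⟦X⟧[X] where
  carrier := {P | ∀ j k, N < j + k → PowerSeries.coeff k (P.coeff j) = 0}
  zero_mem' _ _ _ := by simp
  add_mem' hP hQ j k hjk := by simp [hP j k hjk, hQ j k hjk]
  smul_mem' c P hP j k hjk := by simp [hP j k hjk]

variable {M N : ℕ} {P Q F T S : R⟦X⟧[X]}

theorem mem_totalDegreeLE :
    P ∈ totalDegreeLE R N ↔ ∀ j k, N < j + k → PowerSeries.coeff k (P.coeff j) = 0 := Iff.rfl

theorem totalDegreeLE_mono (h : M ≤ N) : totalDegreeLE R M ≤ totalDegreeLE R N :=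
  fun _ hP j k hjk => hP j k (h.trans_lt hjk)

theorem mul_mem_totalDegreeLE (hP : P ∈ totalDegreeLE R M) (hQ : Q ∈ totalDegreeLE R N) :
    P * Q ∈ totalDegreeLE R (M + N) := by
  intro j k hjk
  simp only [Polynomial.coeff_mul, map_sum, PowerSeries.coeff_mul]
  refine Finset.sum_eq_zero fun x hx => Finset.sum_eq_zero fun z hz => ?_
  rw [Finset.HasAntidiagonal.mem_antidiagonal] at hx hz
  rcases lt_or_ge M (x.1 + z.1) with h | h
  · rw [hP _ _ h, zero_mul]
  · rw [hQ _ _ (by lia), mul_zero]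

theorem derivative_mem_totalDegreeLE (hP : P ∈ totalDegreeLE R N) :
    P.derivative ∈ totalDegreeLE R (N - 1) := by
  intro j k hjk
  rw [Polynomial.coeff_derivative, ← Nat.cast_succ, mul_comm, ← nsmul_eq_mul, map_nsmul,
    hP (j + 1) k (by lia), smul_zero]

theorem coeffDerivation_eulerDerivation_mem_totalDegreeLE (hP : P ∈ totalDegreeLE R N) :
    coeffDerivation (eulerDerivation R) P ∈ totalDegreeLE R N := by
  intro j k hjk
  rw [coeff_coeffDerivation, coeff_eulerDerivation, hP j k hjk, mul_zero]

theorem natDegree_le_of_mem_totalDegreeLE (hP : P ∈ totalDegreeLE R N) : P.natDegree ≤ N :=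
  Polynomial.natDegree_le_iff_coeff_eq_zero.2 fun j hj =>
    PowerSeries.ext fun k => hP j k (by lia)

theorem coeff_eq_C_of_mem_totalDegreeLE (hP : P ∈ totalDegreeLE R N) :
    P.coeff N = PowerSeries.C (PowerSeries.constantCoeff (P.coeff N)) := by
  ext k
  rcases Nat.eq_zero_or_pos k with rfl | hk
  · simp
  · rw [hP N k (by lia), PowerSeries.coeff_C_of_ne_zero hk.ne']

theorem curl_mem_totalDegreeLE (hF : F ∈ totalDegreeLE R N) (hT : T ∈ totalDegreeLE R (N - 1))
    (hS : S ∈ totalDegreeLE R N) :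
    curl (eulerDerivation R) F T S ∈ totalDegreeLE R (2 * N - 1) := by
  have hmul {P Q : R⟦X⟧[X]} (hP : P ∈ totalDegreeLE R N) (hQ : Q ∈ totalDegreeLE R (N - 1)) :
      P * Q ∈ totalDegreeLE R (2 * N - 1) :=
    totalDegreeLE_mono (by lia) (mul_mem_totalDegreeLE hP hQ)
  rw [curl, mul_comm T]
  exact sub_mem
    (sub_mem (hmul hF (coeffDerivation_eulerDerivation_mem_totalDegreeLE hT))
      (hmul (coeffDerivation_eulerDerivation_mem_totalDegreeLE hF) hT))
    (sub_mem (hmul hF (derivative_mem_totalDegreeLE hS))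
      (hmul hS (derivative_mem_totalDegreeLE hF)))

end TotalDegree

section Inclusion

variable {R : Type*} [CommRing R]

/-- The inclusion of `R[t][y]` in `R⟦t⟧[y]`. -/
noncomputable def toSeries : R[X][X] →+* R⟦X⟧[X] :=
  Polynomial.mapRingHom Polynomial.coeToPowerSeries.ringHom

@[simp]
theorem coeff_coeff_toSeries (P : R[X][X]) (j k : ℕ) :
    PowerSeries.coeff k ((toSeries P).coeff j) = (P.coeff j).coeff k := by
  simp [toSeries]

theorem derivative_toSeries (P : R[X][X]) :
    (toSeries P).derivative = toSeries P.derivative :=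
  Polynomial.derivative_map P _

theorem eval_toSeries_C (p : R[X]) (φ : R⟦X⟧) :
    (toSeries (Polynomial.C p)).eval φ = (p : R⟦X⟧) := by
  simp [toSeries]

theorem toSeries_mem_totalDegreeLE {N : ℕ} {P : R[X][X]} :
    toSeries P ∈ totalDegreeLE R N ↔ ∀ j k, N < j + k → (P.coeff j).coeff k = 0 := by
  simp only [mem_totalDegreeLE, coeff_coeff_toSeries]

end Inclusion

section Precision

variable {R : Type*} [CommRing R] {m N : ℕ} {P F T S : R⟦X⟧[X]}

theorem C_X_pow_dvd_iff : Polynomial.C (PowerSeries.X ^ m) ∣ P ↔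
    ∀ j, ∀ k < m, PowerSeries.coeff k (P.coeff j) = 0 := by
  simp only [Polynomial.C_dvd_iff_dvd_coeff, PowerSeries.X_pow_dvd_iff]

theorem eq_zero_of_C_X_pow_dvd (hN : N < m) (hP : P ∈ totalDegreeLE R N)
    (hdvd : Polynomial.C (PowerSeries.X ^ m) ∣ P) : P = 0 := by
  ext j k
  rcases lt_or_ge k m with hk | hk
  · exact C_X_pow_dvd_iff.1 hdvd j k hk
  · exact hP j k (by lia)

theorem C_X_pow_dvd_curl (hT : Polynomial.C (PowerSeries.X ^ m) ∣ T)
    (hS : Polynomial.C (PowerSeries.X ^ m) ∣ S) :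
    Polynomial.C (PowerSeries.X ^ m) ∣ curl (eulerDerivation R) F T S := by
  have hT' : Polynomial.C (PowerSeries.X ^ m) ∣ coeffDerivation (eulerDerivation R) T := by
    refine C_X_pow_dvd_iff.2 fun j k hk => ?_
    rw [coeff_coeffDerivation, coeff_eulerDerivation, C_X_pow_dvd_iff.1 hT j k hk, mul_zero]
  have hS' : Polynomial.C (PowerSeries.X ^ m) ∣ S.derivative := by
    obtain ⟨U, rfl⟩ := hS
    rw [Polynomial.derivative_C_mul]
    exact dvd_mul_right _ _
  exact dvd_sub (dvd_sub (hT'.mul_left F) (hT.mul_right _))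
    (dvd_sub (hS'.mul_left F) (hS.mul_right _))

/-- The polynomial of `R[t][y]` that agrees with `P` up to total degree `N` and has no terms of
larger degree. -/
noncomputable def truncTotalDegree (N : ℕ) (P : R⟦X⟧[X]) : R[X][X] :=
  ∑ j ∈ Finset.range (N + 1), Polynomial.monomial j (PowerSeries.trunc (N + 1 - j) (P.coeff j))

theorem coeff_coeff_truncTotalDegree (N : ℕ) (P : R⟦X⟧[X]) (j k : ℕ) :
    ((truncTotalDegree N P).coeff j).coeff k =
      if j + k ≤ N then PowerSeries.coeff k (P.coeff j) else 0 := by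
  simp only [truncTotalDegree, Polynomial.finsetSum_coeff, Polynomial.coeff_monomial,
    Finset.sum_ite_eq', Finset.mem_range]
  split_ifs with hj hjk hjk
  · rw [PowerSeries.coeff_trunc, if_pos (by lia)]
  · rw [PowerSeries.coeff_trunc, if_neg (by lia)]
  · lia
  · exact Polynomial.coeff_zero k

theorem toSeries_truncTotalDegree_mem_totalDegreeLE (N : ℕ) (P : R⟦X⟧[X]) :
    toSeries (truncTotalDegree N P) ∈ totalDegreeLE R N := by
  intro j k hjk
  rw [coeff_coeff_toSeries, coeff_coeff_truncTotalDegree, if_neg hjk.not_ge]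

theorem C_X_pow_dvd_sub_toSeries_truncTotalDegree
    (hP : ∀ j, ∀ k < m, N < j + k → PowerSeries.coeff k (P.coeff j) = 0) :
    Polynomial.C (PowerSeries.X ^ m) ∣
      P - toSeries (truncTotalDegree N P) := by
  refine C_X_pow_dvd_iff.2 fun j k hk => ?_
  rw [Polynomial.coeff_sub, map_sub, coeff_coeff_toSeries, coeff_coeff_truncTotalDegree]
  split_ifs with hjk
  · exact sub_self _
  · rw [hP j k hk (not_le.1 hjk), sub_zero]

end Precision

section ZeroEstimate

variable {R : Type*} [CommRing R]

theorem natDegree_det_le {ι : Type*} [Fintype ι] [DecidableEq ι] (M : Matrix ι ι R[X])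
    (r c : ι → ℕ) (hM : ∀ i j, M i j ≠ 0 → (M i j).natDegree + r i ≤ c j) :
    M.det.natDegree ≤ ∑ j, c j - ∑ i, r i := by
  rw [Matrix.det_apply]
  refine Polynomial.natDegree_sum_le_of_forall_le _ _ fun σ _ =>
    (Polynomial.natDegree_smul_le _ _).trans ?_
  by_cases hσ : ∃ j, M (σ j) j = 0
  · obtain ⟨j, hj⟩ := hσ
    have hprod : ∏ i, M (σ i) i = 0 := Finset.prod_eq_zero (Finset.mem_univ j) hj
    simp [hprod]
  · push Not at hσ
    refine (Polynomial.natDegree_prod_le _ _).trans (Nat.le_sub_of_add_le ?_)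
    rw [← Equiv.sum_comp σ r, ← Finset.sum_add_distrib]
    exact Finset.sum_le_sum fun j _ => hM (σ j) j (hσ j)

theorem natDegree_coeff_add_le {P : R[X][X]} {N j : ℕ} (hP : toSeries P ∈ totalDegreeLE R N)
    (hj : P.coeff j ≠ 0) : (P.coeff j).natDegree + j ≤ N := by
  by_contra! h
  exact hj (Polynomial.leadingCoeff_eq_zero.1
    (toSeries_mem_totalDegreeLE.1 hP j _ (by lia)))

theorem natDegree_resultant_le {F B : R[X][X]} {m e : ℕ} (hF : toSeries F ∈ totalDegreeLE R m)
    (hB : toSeries B ∈ totalDegreeLE R e) : (Polynomial.resultant F B m e).natDegree ≤ m * e := by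
  -- The coefficient of `y ^ l` in column `j` lies in row `l + j`, so that its degree is at most
  -- the total degree plus `j` minus the row.
  let c : Fin (m + e) → ℕ := Fin.addCases (fun j => e + j) (fun j => m + j)
  have hentry (i j) (hij : Polynomial.sylvester F B m e i j ≠ 0) :
      (Polynomial.sylvester F B m e i j).natDegree + i ≤ c j := by
    induction j using Fin.addCases with
    | left j =>
      simp only [Polynomial.sylvester, Matrix.of_apply, Fin.addCases_left, c] at hij ⊢
      split_ifs at hij ⊢ with hi
      · have := natDegree_coeff_add_le hB hij
        have := hi.1
        lia
      · exact absurd rfl hij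
    | right j =>
      simp only [Polynomial.sylvester, Matrix.of_apply, Fin.addCases_right, c] at hij ⊢
      split_ifs at hij ⊢ with hi
      · have := natDegree_coeff_add_le hF hij
        have := hi.1
        lia
      · exact absurd rfl hij
  refine (natDegree_det_le _ (fun i : Fin (m + e) => (i : ℕ)) c hentry).trans ?_
  simp only [Fin.sum_univ_add, Fin.addCases_left, Fin.addCases_right, Finset.sum_add_distrib,
    Fin.val_castAdd, Fin.val_natAdd, Finset.sum_const, Finset.card_univ, Fintype.card_fin,
    smul_eq_mul, c]
  lia

theorem resultant_ne_zero_of_irreducible {A : Type*} [CommRing A] [IsDomain A]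
    [IsIntegrallyClosed A] {F B : A[X]} (hF : F.Monic) (hirr : Irreducible F) (hB : B ≠ 0) {e : ℕ}
    (hBe : B.natDegree ≤ e) (he : e < F.natDegree) :
    Polynomial.resultant F B F.natDegree e ≠ 0 := by
  let ι := algebraMap A (FractionRing A)
  have hι : Function.Injective ι := IsFractionRing.injective A _
  have hcoprime : IsCoprime (F.map ι) (B.map ι) := by
    refine ((hF.irreducible_iff_irreducible_map_fraction_map.1 hirr).coprime_iff_not_dvd).2
      fun hdvd => ?_
    have h := Polynomial.natDegree_le_of_dvd hdvd ((Polynomial.map_ne_zero_iff hι).2 hB)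
    rw [hF.natDegree_map, Polynomial.natDegree_map_eq_of_injective hι] at h
    lia
  have hres := Polynomial.resultant_ne_zero _ _ hcoprime
  rw [hF.natDegree_map, Polynomial.natDegree_map_eq_of_injective hι, Polynomial.resultant_map_map,
    map_ne_zero_iff ι hι] at hres
  obtain ⟨k, rfl⟩ := Nat.exists_eq_add_of_le hBe
  rwa [Polynomial.resultant_add_right_deg _ _ _ _ _ le_rfl, hF.coeff_natDegree, one_pow, one_mul]

/-- The resultant of `F` and `B` is a combination of the two, so along a branch of `F` it vanishes
to at least the order of `B`, although its degree in `t` is at most the Bézout bound. -/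
theorem eq_zero_of_X_pow_dvd_eval [IsDomain R] [IsIntegrallyClosed R[X]] {F B : R[X][X]} {e : ℕ}
    (hF : F.Monic) (hirr : Irreducible F) (hFd : toSeries F ∈ totalDegreeLE R F.natDegree)
    (hB : toSeries B ∈ totalDegreeLE R e) (he : e < F.natDegree) {φ : R⟦X⟧}
    (hφ : (toSeries F).eval φ = 0)
    (hdvd : PowerSeries.X ^ (F.natDegree * e + 1) ∣ (toSeries B).eval φ) : B = 0 := by
  have hBe : B.natDegree ≤ e := Polynomial.natDegree_le_iff_coeff_eq_zero.2 fun j hj =>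
    Polynomial.ext fun k => toSeries_mem_totalDegreeLE.1 hB j k (by lia)
  by_contra hB0
  refine resultant_ne_zero_of_irreducible hF hirr hB0 hBe he (Polynomial.ext fun k => ?_)
  obtain ⟨p, q, -, -, hpq⟩ := Polynomial.exists_mul_add_mul_eq_C_resultant F B le_rfl hBe
    (Or.inl (Nat.ne_zero_of_lt he))
  have hval := congrArg (fun P => (toSeries P).eval φ) hpq
  simp only [map_add, map_mul, Polynomial.eval_add, Polynomial.eval_mul, hφ, zero_mul, zero_add,
    eval_toSeries_C] at hval
  rcases Nat.lt_or_ge k (F.natDegree * e + 1) with hk | hk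
  · rw [← Polynomial.coeff_coe, ← hval, Polynomial.coeff_zero]
    exact PowerSeries.X_pow_dvd_iff.1 (hdvd.mul_right _) k hk
  · exact Polynomial.coeff_eq_zero_of_natDegree_lt ((natDegree_resultant_le hFd hB).trans_lt hk)

end ZeroEstimate

section Obstructions

variable {R : Type*} [CommRing R]

/-- The coefficients of `t ^ k`, `k < 2 * d`, in the terms of `P_y * Q` of total degree at least `d`
and in the terms of `(t * P_t) * Q` of total degree larger than `d`. They vanish if `P * Q` is a
factorization in `R[t][y]` of a polynomial of total degree `d`. -/
def obstructions (d : ℕ) (P Q : R⟦X⟧[X]) : Set R :=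
  {c | ∃ j k, k < 2 * d ∧
    (d ≤ j + k ∧ PowerSeries.coeff k ((P.derivative * Q).coeff j) = c ∨
      d < j + k ∧
        PowerSeries.coeff k ((coeffDerivation (eulerDerivation R) P * Q).coeff j) = c)}

variable {d : ℕ} {P Q : R⟦X⟧[X]}

theorem map_mem_obstructions {S : Type*} [CommRing S] (g : R →+* S) {c : R}
    (hc : c ∈ obstructions d P Q) :
    g c ∈ obstructions d (P.map (PowerSeries.map g)) (Q.map (PowerSeries.map g)) := by
  obtain ⟨j, k, hk, ⟨hjk, rfl⟩ | ⟨hjk, rfl⟩⟩ := hc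
  · refine ⟨j, k, hk, .inl ⟨hjk, ?_⟩⟩
    rw [Polynomial.derivative_map, ← Polynomial.map_mul, Polynomial.coeff_map,
      PowerSeries.coeff_map]
  · refine ⟨j, k, hk, .inr ⟨hjk, ?_⟩⟩
    rw [← map_coeffDerivation_eulerDerivation, ← Polynomial.map_mul, Polynomial.coeff_map,
      PowerSeries.coeff_map]

theorem eq_zero_of_mem_obstructions {a b : ℕ} (ha : 0 < a) (hP : P ∈ totalDegreeLE R a)
    (hQ : Q ∈ totalDegreeLE R b) {c : R} (hc : c ∈ obstructions (a + b) P Q) : c = 0 := by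
  obtain ⟨j, k, -, ⟨hjk, rfl⟩ | ⟨hjk, rfl⟩⟩ := hc
  · exact mul_mem_totalDegreeLE (derivative_mem_totalDegreeLE hP) hQ j k (by lia)
  · exact mul_mem_totalDegreeLE (coeffDerivation_eulerDerivation_mem_totalDegreeLE hP) hQ j k hjk

theorem exists_curl_eq_zero_of_obstructions (hPQ : P * Q ∈ totalDegreeLE R d)
    (hzero : ∀ c ∈ obstructions d P Q, c = 0) :
    ∃ T S : R[X][X], toSeries T ∈ totalDegreeLE R (d - 1) ∧
      Polynomial.C (PowerSeries.X ^ (2 * d)) ∣ P.derivative * Q - toSeries T ∧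
      curl (eulerDerivation R) (P * Q) (toSeries T) (toSeries S) = 0 := by
  rcases Nat.eq_zero_or_pos d with rfl | hd
  · exact ⟨0, 0, by simp, by simp, by simp [curl]⟩
  have hT := C_X_pow_dvd_sub_toSeries_truncTotalDegree (m := 2 * d) (N := d - 1)
    (P := P.derivative * Q)
    fun j k hk hjk => hzero _ ⟨j, k, hk, .inl ⟨by lia, rfl⟩⟩
  have hS := C_X_pow_dvd_sub_toSeries_truncTotalDegree (m := 2 * d) (N := d)
    (P := coeffDerivation (eulerDerivation R) P * Q)
    fun j k hk hjk => hzero _ ⟨j, k, hk, .inr ⟨hjk, rfl⟩⟩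
  refine ⟨truncTotalDegree (d - 1) (P.derivative * Q),
    truncTotalDegree d (coeffDerivation (eulerDerivation R) P * Q),
    toSeries_truncTotalDegree_mem_totalDegreeLE _ _, hT,
    eq_zero_of_C_X_pow_dvd (N := 2 * d - 1) (m := 2 * d) (by lia)
      (curl_mem_totalDegreeLE hPQ (toSeries_truncTotalDegree_mem_totalDegreeLE _ _)
        (toSeries_truncTotalDegree_mem_totalDegreeLE _ _)) ?_⟩
  have h := C_X_pow_dvd_curl (F := P * Q) hT hS
  rwa [curl_sub, curl_logDeriv, zero_sub, dvd_neg] at h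

theorem X_pow_dvd_eval_sub {m : ℕ} {T U : R⟦X⟧[X]}
    (h : Polynomial.C (PowerSeries.X ^ m) ∣ T - U) (φ : R⟦X⟧) :
    PowerSeries.X ^ m ∣ T.eval φ - U.eval φ := by
  simpa using Polynomial.eval_dvd (x := φ) h

variable [IsDomain R] [IsIntegrallyClosed R[X]] {F : R[X][X]}

/-- The residue of the form at the branch `φ` is a constant of the Euler derivation, hence equal
to its initial value `1`. -/
theorem eq_derivative_of_curl_eq_zero {T S : R[X][X]} {φ : R⟦X⟧} {m : ℕ} (hF : F.Monic)
    (hirr : Irreducible F) (hFd : toSeries F ∈ totalDegreeLE R F.natDegree)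
    (hT : toSeries T ∈ totalDegreeLE R (F.natDegree - 1))
    (hclosed : curl (eulerDerivation R) (toSeries F) (toSeries T) (toSeries S) = 0)
    (hφ : (toSeries F).eval φ = 0)
    (hsimple : PowerSeries.constantCoeff ((toSeries F).derivative.eval φ) ≠ 0)
    (hTφ : PowerSeries.X ^ m ∣ (toSeries T).eval φ - (toSeries F).derivative.eval φ)
    (hchar : ∀ k, m ≤ k → k ≤ F.natDegree * (F.natDegree - 1) → (k : R) ≠ 0) :
    T = F.derivative := by
  have hd : 0 < F.natDegree := hF.natDegree_pos_of_not_isUnit hirr.not_isUnit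
  have hresidue := derivation_residue hclosed hφ fun h => hsimple (by rw [h, map_zero])
  have hδ : PowerSeries.X ^ (F.natDegree * (F.natDegree - 1) + 1) ∣
      (toSeries T).eval φ - (toSeries F).derivative.eval φ := by
    refine PowerSeries.X_pow_dvd_iff.2 fun k hk => ?_
    refine coeff_eq_zero_of_eulerDerivation_eq hsimple ?_ (fun k hk hk0 => ?_) k
      (Nat.lt_succ_iff.1 hk)
    · rw [map_sub]
      linear_combination hresidue
    · rcases Nat.lt_or_ge k m with hkm | hkm
      · exact PowerSeries.X_pow_dvd_iff.1 hTφ k hkm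
      · exact absurd hk0 (hchar k hkm hk)
  refine sub_eq_zero.1 (eq_zero_of_X_pow_dvd_eval hF hirr hFd (e := F.natDegree - 1) ?_ (by lia) hφ
    (by rwa [map_sub, ← derivative_toSeries, Polynomial.eval_sub]))
  rw [map_sub, ← derivative_toSeries]
  exact sub_mem hT (derivative_mem_totalDegreeLE hFd)

theorem exists_ne_zero_mem_obstructions {φ ψ : R⟦X⟧} (hF : F.Monic) (hirr : Irreducible F)
    (hFd : toSeries F ∈ totalDegreeLE R F.natDegree) (hPQ : toSeries F = P * Q)
    (hφ : P.eval φ = 0) (hψ : Q.eval ψ = 0)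
    (hφF : PowerSeries.constantCoeff ((toSeries F).derivative.eval φ) ≠ 0)
    (hψF : PowerSeries.constantCoeff ((toSeries F).derivative.eval ψ) ≠ 0)
    (hchar : ∀ k, 2 * F.natDegree ≤ k → k ≤ F.natDegree * (F.natDegree - 1) → (k : R) ≠ 0) :
    ∃ c ∈ obstructions F.natDegree P Q, c ≠ 0 := by
  by_contra! hzero
  obtain ⟨T, S, hT, hTPQ, hclosed⟩ := exists_curl_eq_zero_of_obstructions (hPQ ▸ hFd) hzero
  have hTφ : PowerSeries.X ^ (2 * F.natDegree) ∣
      (toSeries T).eval φ - (toSeries F).derivative.eval φ := by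
    rw [hPQ, Polynomial.derivative_mul, Polynomial.eval_add, Polynomial.eval_mul (p := P), hφ,
      zero_mul, add_zero, dvd_sub_comm]
    exact X_pow_dvd_eval_sub hTPQ φ
  have hTF : T = F.derivative := eq_derivative_of_curl_eq_zero hF hirr hFd hT (hPQ ▸ hclosed)
    (by rw [hPQ, Polynomial.eval_mul, hφ, zero_mul]) hφF hTφ hchar
  have hTψ := X_pow_dvd_eval_sub hTPQ ψ
  rw [Polynomial.eval_mul, hψ, mul_zero, zero_sub, dvd_neg, hTF, ← derivative_toSeries] at hTψ
  have hd : 0 < F.natDegree := hF.natDegree_pos_of_not_isUnit hirr.not_isUnit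
  exact hψF (by simpa using PowerSeries.X_pow_dvd_iff.1 hTψ 0 (by lia))

end Obstructions

section Weighted

variable (σ R : Type*) [CommRing R]

/-- The power series `∑ cₖ t ^ k` over `R[σ]` such that `cₖ` has total degree at most `k`; they are
the power series that only involve products of `t` with a polynomial of degree at most one. -/
noncomputable def weightedSubring : Subring (MvPolynomial σ R)⟦X⟧ where
  carrier := {φ | ∀ k, (PowerSeries.coeff k φ).totalDegree ≤ k}
  zero_mem' k := by simp
  one_mem' k := by
    rw [PowerSeries.coeff_one]
    split_ifs <;> simp
  add_mem' hφ hψ k := by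
    rw [map_add]
    exact (MvPolynomial.totalDegree_add _ _).trans (max_le (hφ k) (hψ k))
  neg_mem' hφ k := by
    rw [map_neg, MvPolynomial.totalDegree_neg]
    exact hφ k
  mul_mem' hφ hψ k := by
    rw [PowerSeries.coeff_mul]
    refine MvPolynomial.totalDegree_finsetSum_le fun x hx =>
      (MvPolynomial.totalDegree_mul _ _).trans ((add_le_add (hφ _) (hψ _)).trans ?_)
    exact (Finset.HasAntidiagonal.mem_antidiagonal.1 hx).le

/-- The polynomials in `R[σ]⟦t⟧[y]` all of whose coefficients lie in `weightedSubring σ R`. -/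
noncomputable def weightedPolynomials : Subring (MvPolynomial σ R)⟦X⟧[X] :=
  Polynomial.liftsRing (weightedSubring σ R).subtype

variable {σ R} {P Q F : (MvPolynomial σ R)⟦X⟧[X]} {φ : (MvPolynomial σ R)⟦X⟧}

theorem mem_weightedPolynomials :
    P ∈ weightedPolynomials σ R ↔ ∀ j, P.coeff j ∈ weightedSubring σ R := by
  rw [weightedPolynomials, ← Polynomial.lifts_iff_liftsRing, Polynomial.lifts_iff_coeff_lifts]
  simp

theorem C_mem_weightedPolynomials (hφ : φ ∈ weightedSubring σ R) :
    Polynomial.C φ ∈ weightedPolynomials σ R :=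
  ⟨Polynomial.C ⟨φ, hφ⟩, Polynomial.map_C _⟩

theorem X_mem_weightedPolynomials : Polynomial.X ∈ weightedPolynomials σ R :=
  ⟨Polynomial.X, Polynomial.map_X _⟩

theorem eval_mem_weightedSubring (hP : P ∈ weightedPolynomials σ R)
    (hφ : φ ∈ weightedSubring σ R) : P.eval φ ∈ weightedSubring σ R := by
  obtain ⟨p, rfl⟩ := hP
  lift φ to weightedSubring σ R using hφ
  rw [Polynomial.coe_mapRingHom, Polynomial.eval_map, ← Subring.subtype_apply,
    Polynomial.eval₂_hom]
  exact (p.eval φ).2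

theorem derivative_mem_weightedPolynomials (hP : P ∈ weightedPolynomials σ R) :
    P.derivative ∈ weightedPolynomials σ R := by
  obtain ⟨p, rfl⟩ := hP
  exact ⟨p.derivative, (Polynomial.derivative_map p _).symm⟩

theorem coeffDerivation_eulerDerivation_mem_weightedPolynomials
    (hP : P ∈ weightedPolynomials σ R) :
    coeffDerivation (eulerDerivation (MvPolynomial σ R)) P ∈ weightedPolynomials σ R := by
  refine mem_weightedPolynomials.2 fun j k => ?_
  rw [coeff_coeffDerivation, coeff_eulerDerivation, ← nsmul_eq_mul]
  exact (MvPolynomial.totalDegree_smul_le _ _).trans (mem_weightedPolynomials.1 hP j k)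

theorem totalDegree_le_of_mem_obstructions {d : ℕ} (hP : P ∈ weightedPolynomials σ R)
    (hQ : Q ∈ weightedPolynomials σ R) {c : MvPolynomial σ R} (hc : c ∈ obstructions d P Q) :
    c.totalDegree ≤ 2 * d - 1 := by
  obtain ⟨j, k, hk, ⟨-, rfl⟩ | ⟨-, rfl⟩⟩ := hc
  · exact (mem_weightedPolynomials.1
      (mul_mem (derivative_mem_weightedPolynomials hP) hQ) j k).trans (by lia)
  · exact (mem_weightedPolynomials.1
      (mul_mem (coeffDerivation_eulerDerivation_mem_weightedPolynomials hP) hQ) j k).trans (by lia)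

end Weighted

section Hensel

variable {A : Type*} [CommRing A] {F : A⟦X⟧[X]}

theorem constantCoeff_eval (F : A⟦X⟧[X]) (φ : A⟦X⟧) :
    PowerSeries.constantCoeff (F.eval φ) =
      (F.map PowerSeries.constantCoeff).eval (PowerSeries.constantCoeff φ) := by
  rw [Polynomial.eval_map, Polynomial.eval₂_hom]

theorem exists_eval_eq_zero_of_isUnit (hF : F.Monic) {a : A}
    (ha : (F.map PowerSeries.constantCoeff).eval a = 0)
    (hunit : IsUnit ((F.map PowerSeries.constantCoeff).derivative.eval a)) :
    ∃ φ : A⟦X⟧, F.eval φ = 0 ∧ PowerSeries.constantCoeff φ = a := by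
  have hroot : F.eval (PowerSeries.C a) ∈ Ideal.span {(PowerSeries.X : A⟦X⟧)} := by
    rw [Ideal.mem_span_singleton, PowerSeries.X_dvd_iff, constantCoeff_eval,
      PowerSeries.constantCoeff_C, ha]
  have hsimple : IsUnit (F.derivative.eval (PowerSeries.C a)) := by
    rwa [PowerSeries.isUnit_iff_constantCoeff, constantCoeff_eval, PowerSeries.constantCoeff_C,
      ← Polynomial.derivative_map]
  obtain ⟨φ, hφ, hφa⟩ := HenselianRing.is_henselian F hF _ hroot (hsimple.map _)
  rw [Ideal.mem_span_singleton, PowerSeries.X_dvd_iff, map_sub, PowerSeries.constantCoeff_C,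
    sub_eq_zero] at hφa
  exact ⟨φ, hφ, hφa⟩

theorem exists_eq_nodal (hF : F.Monic) {ι : Type*} [Fintype ι] {a : ι → A}
    (ha : F.map PowerSeries.constantCoeff = nodal Finset.univ a)
    (hunit : Pairwise fun i j => IsUnit (a i - a j)) :
    ∃ φ : ι → A⟦X⟧, F = nodal Finset.univ φ ∧ ∀ i, PowerSeries.constantCoeff (φ i) = a i := by
  classical
  have hroot (i) : ∃ φ : A⟦X⟧, F.eval φ = 0 ∧ PowerSeries.constantCoeff φ = a i := by
    refine exists_eval_eq_zero_of_isUnit hF ?_ ?_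
    · rw [ha, Lagrange.eval_nodal_at_node (Finset.mem_univ i)]
    · rw [ha, Lagrange.eval_nodal_derivative_eval_node_eq (Finset.mem_univ i),
        Lagrange.eval_nodal]
      exact (Finset.univ.erase i).prod_induction _ _ (fun _ _ => IsUnit.mul) isUnit_one
        fun j hj => hunit (Finset.ne_of_mem_erase hj).symm
  choose φ hφ hφa using hroot
  refine ⟨φ, ?_, hφa⟩
  cases subsingleton_or_nontrivial A
  · exact Subsingleton.elim _ _
  refine Polynomial.eq_of_monic_of_dvd_of_natDegree_le nodal_monic hF ?_ ?_
  · refine Finset.prod_dvd_of_coprime (fun i _ j _ hij => ?_)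
      fun i _ => Polynomial.dvd_iff_isRoot.2 (hφ i)
    refine Polynomial.isCoprime_X_sub_C_of_isUnit_sub ?_
    rw [PowerSeries.isUnit_iff_constantCoeff, map_sub, hφa, hφa]
    exact hunit hij
  · rw [← hF.natDegree_map PowerSeries.constantCoeff, ha,
      natDegree_nodal, natDegree_nodal]

theorem coeff_eval_add_X_pow_mul (F : A⟦X⟧[X]) (ψ u : A⟦X⟧) {k : ℕ} (hk : 0 < k) :
    PowerSeries.coeff k (F.eval (ψ + PowerSeries.X ^ k * u)) = PowerSeries.coeff k (F.eval ψ) +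
      PowerSeries.constantCoeff (F.derivative.eval ψ) * PowerSeries.constantCoeff u := by
  obtain ⟨w, hw⟩ := Polynomial.binomExpansion F ψ (PowerSeries.X ^ k * u)
  have hfactor : F.derivative.eval ψ * (PowerSeries.X ^ k * u) + w * (PowerSeries.X ^ k * u) ^ 2 =
      PowerSeries.X ^ k * (F.derivative.eval ψ * u + PowerSeries.X ^ k * (w * u ^ 2)) := by ring
  rw [hw, add_assoc, hfactor, map_add, PowerSeries.coeff_X_pow_mul', if_pos le_rfl, Nat.sub_self,
    PowerSeries.coeff_zero_eq_constantCoeff_apply]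
  simp [hk.ne']

/-- Newton's iteration determines the coefficient of `t ^ k` of a simple root from the previous
ones, and the only division is by the derivative at the initial value. -/
theorem mem_weightedSubring_of_eval_eq_zero {σ R : Type*} [CommRing R]
    {F : (MvPolynomial σ R)⟦X⟧[X]} (hF : F ∈ weightedPolynomials σ R) {φ : (MvPolynomial σ R)⟦X⟧}
    (hφ : F.eval φ = 0) {c r : R} (hc : PowerSeries.constantCoeff φ = MvPolynomial.C c)
    (hr : PowerSeries.constantCoeff (F.derivative.eval φ) = MvPolynomial.C r) (hunit : IsUnit r) :
    φ ∈ weightedSubring σ R := by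
  intro k
  induction k using Nat.strong_induction_on with
  | _ k ih =>
  rcases Nat.eq_zero_or_pos k with rfl | hk
  · rw [PowerSeries.coeff_zero_eq_constantCoeff_apply, hc, MvPolynomial.totalDegree_C]
  set ψ := (φ.trunc k).toPowerSeries with hψ
  have hψmem : ψ ∈ weightedSubring σ R := fun i => by
    rw [hψ, Polynomial.coeff_coe, PowerSeries.coeff_trunc]
    split_ifs with hi
    · exact ih i hi
    · simp
  have hψ0 : PowerSeries.constantCoeff ψ = PowerSeries.constantCoeff φ := by
    rw [← PowerSeries.coeff_zero_eq_constantCoeff_apply, hψ, Polynomial.coeff_coe,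
      PowerSeries.coeff_trunc, if_pos hk, PowerSeries.coeff_zero_eq_constantCoeff_apply]
  have hcoeff : PowerSeries.coeff k (F.eval ψ) + MvPolynomial.C r * PowerSeries.coeff k φ = 0 := by
    have h := coeff_eval_add_X_pow_mul F ψ (PowerSeries.mk fun i => PowerSeries.coeff (i + k) φ) hk
    rw [add_comm ψ, hψ, ← PowerSeries.eq_X_pow_mul_shift_add_trunc, hφ, map_zero, ← hψ,
      constantCoeff_eval, hψ0, ← constantCoeff_eval, hr,
      ← PowerSeries.coeff_zero_eq_constantCoeff_apply, PowerSeries.coeff_mk, zero_add] at h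
    exact h.symm
  obtain ⟨s, hs⟩ := hunit.exists_left_inv
  have hsolve : PowerSeries.coeff k φ = (-s) • PowerSeries.coeff k (F.eval ψ) := by
    have hsC : MvPolynomial.C s * MvPolynomial.C r = (1 : MvPolynomial σ R) := by
      rw [← map_mul, hs, map_one]
    rw [MvPolynomial.smul_eq_C_mul, map_neg]
    linear_combination MvPolynomial.C s * hcoeff - PowerSeries.coeff k φ * hsC
  rw [hsolve]
  exact (MvPolynomial.totalDegree_smul_le _ _).trans (eval_mem_weightedSubring hF hψmem k)

end Hensel

section Resultant

theorem resultant_eq_polynomial_resultant_swap {R : Type*} [CommRing R] (f g : R[X]) :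
    resultant f g = Polynomial.resultant g f := by
  rw [resultant, Polynomial.resultant, Polynomial.sylvester,
    ← Matrix.det_submatrix_equiv_self (finCongr (Nat.add_comm g.natDegree f.natDegree))]
  congr 1
  ext i j
  induction j using Fin.addCases with
  | left j =>
    have := fun h : j + f.natDegree < i =>
      f.coeff_eq_zero_of_natDegree_lt (show f.natDegree < i - j by lia)
    simp only [sylvesterMatrix, Matrix.submatrix_apply, Matrix.of_apply, Fin.addCases_left,
      finCongr_apply, Fin.val_cast, Fin.val_castAdd, j.2, if_true, Set.mem_Icc]
    grind
  | right j =>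
    simp only [sylvesterMatrix, Matrix.submatrix_apply, Matrix.of_apply, Fin.addCases_right,
      finCongr_apply, Fin.val_cast, Fin.val_natAdd, Set.mem_Icc]
    have := fun h : j + g.natDegree < i =>
      g.coeff_eq_zero_of_natDegree_lt (show g.natDegree < i - j by lia)
    grind

theorem isCoprime_of_resultant_ne_zero {K : Type*} [Field K] {f g : K[X]} (hf : f ≠ 0)
    (h : resultant f g ≠ 0) : IsCoprime f g := by
  rw [resultant_eq_polynomial_resultant_swap, Ne, Polynomial.resultant_eq_zero_iff] at h
  exact (not_not.1 fun hgf => h ⟨.inr hf, hgf⟩).symm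

end Resultant

section Lines

open Polynomial.Bivariate

theorem totalDegree_aeval_le {R σ τ : Type*} [CommSemiring R] {g : σ → MvPolynomial τ R}
    (hg : ∀ i, (g i).totalDegree ≤ 1) (p : MvPolynomial σ R) :
    (aeval g p).totalDegree ≤ p.totalDegree := by
  rw [aeval_def, eval₂_eq]
  refine totalDegree_finsetSum_le fun m hm => ?_
  calc (C (p.coeff m) * ∏ i ∈ m.support, g i ^ m i).totalDegree
      ≤ ∑ i ∈ m.support, m i * 1 := by
        refine (totalDegree_mul _ _).trans ?_
        rw [totalDegree_C, zero_add]
        exact (totalDegree_finsetProd _ _).trans (Finset.sum_le_sum fun i _ =>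
          (totalDegree_pow _ _).trans (Nat.mul_le_mul_left _ (hg i)))
    _ ≤ p.totalDegree := by
        simp only [mul_one]
        exact le_totalDegree hm

theorem totalDegree_restrictLine_le {R : Type*} [CommSemiring R] [Nontrivial R] {n : ℕ}
    (a : Fin n → R) (f : MvPolynomial (Option (Fin n)) R) :
    (restrictLine a f).totalDegree ≤ f.totalDegree := by
  refine totalDegree_aeval_le (fun v => ?_) f
  cases v with
  | none => exact (totalDegree_X _).le
  | some i => exact (totalDegree_mul _ _).trans (by simp)

theorem equivMvPolynomial_symm_monomial {R : Type*} [CommRing R] (m : Fin 2 →₀ ℕ) (c : R) :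
    (equivMvPolynomial R).symm (monomial m c) =
      Polynomial.monomial (m 1) (Polynomial.monomial (m 0) c) := by
  rw [monomial_eq, Finsupp.prod_fintype _ _ (by simp), Fin.prod_univ_two]
  simp [← Polynomial.C_mul_X_pow_eq_monomial, mul_assoc]

theorem toSeries_equivMvPolynomial_symm_mem_totalDegreeLE {R : Type*} [CommRing R]
    (p : MvPolynomial (Fin 2) R) :
    toSeries ((equivMvPolynomial R).symm p) ∈ totalDegreeLE R p.totalDegree := by
  rw [p.as_sum, map_sum, map_sum, ← p.as_sum]
  refine sum_mem fun m hm => toSeries_mem_totalDegreeLE.2 fun j k hjk => ?_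
  have hmdeg : m 0 + m 1 ≤ p.totalDegree := by
    simpa [Finsupp.sum_fintype] using le_totalDegree hm
  rw [equivMvPolynomial_symm_monomial, Polynomial.coeff_monomial]
  split_ifs
  · exact Polynomial.coeff_monomial_of_ne _ (by lia)
  · exact Polynomial.coeff_zero k

variable {R : Type*} [CommRing R] {n : ℕ}

/-- The restriction `f(z₁t, …, zₙt, y)` of `f` to the generic line through the origin, as an
element of `R[z₁,…,zₙ][t][y]`. -/
noncomputable def genericLine :
    MvPolynomial (Option (Fin n)) R →ₐ[R] (MvPolynomial (Fin n) R)[X][X] :=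
  aeval fun v : Option (Fin n) => v.elim Polynomial.X
    fun i => Polynomial.C (Polynomial.C (X i) * Polynomial.X)

theorem genericLine_eq_restrictLine (f : MvPolynomial (Option (Fin n)) R) :
    genericLine f = (equivMvPolynomial _).symm (restrictLine X (f.map C)) := by
  induction f using MvPolynomial.induction_on with
  | C c => simp [genericLine, restrictLine, algebraMap_eq]
  | add p q hp hq => simp [hp, hq]
  | mul_X p v hp =>
    simp only [map_mul, hp, map_X]
    cases v <;> simp [genericLine, restrictLine]

theorem toSeries_genericLine_mem_totalDegreeLE [Nontrivial R]
    (f : MvPolynomial (Option (Fin n)) R) :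
    toSeries (genericLine f) ∈ totalDegreeLE (MvPolynomial (Fin n) R) f.totalDegree := by
  rw [genericLine_eq_restrictLine]
  have hdeg : (restrictLine X (f.map C)).totalDegree ≤ f.totalDegree :=
    (totalDegree_restrictLine_le _ _).trans (Finset.sup_mono (support_map_subset C f))
  exact totalDegreeLE_mono hdeg (toSeries_equivMvPolynomial_symm_mem_totalDegreeLE _)

theorem toSeries_genericLine_mem_weightedPolynomials (f : MvPolynomial (Option (Fin n)) R) :
    toSeries (genericLine f) ∈ weightedPolynomials (Fin n) R := by
  induction f using MvPolynomial.induction_on with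
  | C c =>
    have hc : PowerSeries.C (C c) ∈ weightedSubring (Fin n) R := fun k => by
      rw [PowerSeries.coeff_C]
      split_ifs <;> simp
    simpa [genericLine, algebraMap_eq, toSeries] using C_mem_weightedPolynomials hc
  | add p q hp hq => simpa only [map_add] using add_mem hp hq
  | mul_X p v hp =>
    rw [map_mul, map_mul]
    refine mul_mem hp ?_
    cases v with
    | none => simpa [genericLine, toSeries] using X_mem_weightedPolynomials
    | some i =>
      have hX : PowerSeries.C (X i) * PowerSeries.X ∈ weightedSubring (Fin n) R := fun k => by
        rw [PowerSeries.coeff_C_mul, PowerSeries.coeff_X]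
        split_ifs with hk
        · rw [mul_one, hk]
          exact (totalDegree_monomial_le _ _).trans (by simp)
        · simp
      simpa [genericLine, toSeries] using C_mem_weightedPolynomials hX

theorem map_evalRingHom_one_genericLine (f : MvPolynomial (Option (Fin n)) R) :
    (genericLine f).map (Polynomial.evalRingHom 1) = optionEquivLeft R (Fin n) f := by
  induction f using MvPolynomial.induction_on with
  | C c => simp [genericLine, algebraMap_eq, optionEquivLeft_C]
  | add p q hp hq => simp [hp, hq]
  | mul_X p v hp =>
    simp only [map_mul, Polynomial.map_mul, hp]
    cases v <;> simp [genericLine, optionEquivLeft_X_none, optionEquivLeft_X_some]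

theorem map_constantCoeff_toSeries_genericLine (f : MvPolynomial (Option (Fin n)) R) :
    (toSeries (genericLine f)).map PowerSeries.constantCoeff = (atZero f).map C := by
  induction f using MvPolynomial.induction_on with
  | C c => simp [genericLine, atZero, toSeries, algebraMap_eq]
  | add p q hp hq => simp [hp, hq]
  | mul_X p v hp =>
    simp only [map_mul, Polynomial.map_mul, hp]
    cases v <;> simp [genericLine, atZero, toSeries]

theorem map_eval_toSeries_genericLine (a : Fin n → R) (f : MvPolynomial (Option (Fin n)) R) :
    (toSeries (genericLine f)).map (PowerSeries.map (eval a)) =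
      toSeries ((equivMvPolynomial R).symm (restrictLine a f)) := by
  induction f using MvPolynomial.induction_on with
  | C c => simp [genericLine, restrictLine, toSeries, algebraMap_eq]
  | add p q hp hq => simp [hp, hq]
  | mul_X p v hp =>
    simp only [map_mul, Polynomial.map_mul, hp]
    cases v <;> simp [genericLine, restrictLine, toSeries]

theorem atZero_pderiv (f : MvPolynomial (Option (Fin n)) R) :
    atZero (pderiv none f) = (atZero f).derivative := by
  induction f using MvPolynomial.induction_on with
  | C c => simp [atZero]
  | add p q hp hq => simp [hp, hq]
  | mul_X p v hp =>
    rw [Derivation.leibniz, smul_eq_mul, smul_eq_mul, map_add, map_mul, map_mul, hp, map_mul]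
    cases v <;> simp [atZero, mul_comm]

end Lines

section Nodal

theorem map_nodal {ι A B : Type*} [CommRing A] [CommRing B] (g : A →+* B) (φ : ι → A)
    (t : Finset ι) : (nodal t φ).map g = nodal t (g ∘ φ) := by
  simp [nodal, Polynomial.map_prod]

theorem nodal_mem_weightedPolynomials {ι σ R : Type*} [CommRing R]
    {φ : ι → (MvPolynomial σ R)⟦X⟧} (hφ : ∀ i, φ i ∈ weightedSubring σ R) (t : Finset ι) :
    nodal t φ ∈ weightedPolynomials σ R :=
  prod_mem fun i _ => sub_mem X_mem_weightedPolynomials (C_mem_weightedPolynomials (hφ i))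

end Nodal

section Splitting

variable {R : Type*} [CommRing R] [IsDomain R]

theorem mem_totalDegreeLE_of_isUnit_mul {u P : R⟦X⟧[X]} (hu : IsUnit u) (hP : P.Monic)
    (h : u * P ∈ totalDegreeLE R P.natDegree) : P ∈ totalDegreeLE R P.natDegree := by
  obtain ⟨β, hβ, rfl⟩ := Polynomial.isUnit_iff.1 hu
  have hβC : β = PowerSeries.C (PowerSeries.constantCoeff β) := by
    simpa [hP.coeff_natDegree] using coeff_eq_C_of_mem_totalDegreeLE h
  obtain ⟨s, hs⟩ := (hβ.map PowerSeries.constantCoeff).exists_left_inv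
  have hsP : s • (Polynomial.C β * P) = P := by
    rw [← Polynomial.smul_eq_C_mul, hβC, ← smul_assoc, PowerSeries.smul_eq_C_mul, ← map_mul, hs,
      map_one, one_smul]
  have hmem := Submodule.smul_mem _ s h
  rwa [hsP] at hmem

theorem exists_nodal_mem_totalDegreeLE {ι : Type*} [Fintype ι] [DecidableEq ι]
    {φ : ι → R⟦X⟧} {P Q : R⟦X⟧[X]} {a b : ℕ} (hPQ : P * Q = nodal Finset.univ φ)
    (hP : P ∈ totalDegreeLE R a) (hQ : Q ∈ totalDegreeLE R b) (hab : a + b ≤ Fintype.card ι) :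
    ∃ t : Finset ι, t.card = a ∧ tᶜ.card = b ∧
      nodal t φ ∈ totalDegreeLE R t.card ∧ nodal tᶜ φ ∈ totalDegreeLE R tᶜ.card := by
  obtain ⟨t, t', u, v, htt', hdisj, huv, rfl, rfl⟩ := mul_eq_mul_prime_prod
    (fun i _ => Polynomial.prime_X_sub_C (φ i)) (hPQ.trans (one_mul _).symm)
  obtain rfl : t' = tᶜ := (isCompl_iff.2 ⟨hdisj, codisjoint_iff.2 htt'⟩).compl_eq.symm
  have hu : IsUnit u := .of_mul_eq_one v huv.symm
  have hv : IsUnit v := .of_mul_eq_one u (by rw [mul_comm, ← huv])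
  have hcard {w : R⟦X⟧[X]} (hw : IsUnit w) (t : Finset ι) {N : ℕ}
      (h : w * nodal t φ ∈ totalDegreeLE R N) : t.card ≤ N := by
    rw [← natDegree_nodal (s := t) (v := φ), ← zero_add (nodal t φ).natDegree,
      ← Polynomial.natDegree_eq_zero_of_isUnit hw,
      ← Polynomial.natDegree_mul hw.ne_zero (nodal_monic (s := t) (v := φ)).ne_zero]
    exact natDegree_le_of_mem_totalDegreeLE h
  have hta : t.card ≤ a := hcard hu t hP
  have htb : tᶜ.card ≤ b := hcard hv tᶜ hQ
  have hsum := t.card_add_card_compl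
  obtain rfl : t.card = a := by lia
  obtain rfl : tᶜ.card = b := by lia
  refine ⟨t, rfl, rfl, ?_, ?_⟩
  · rw [← natDegree_nodal (s := t) (v := φ)] at hP ⊢
    exact mem_totalDegreeLE_of_isUnit_mul hu nodal_monic hP
  · rw [← natDegree_nodal (s := tᶜ) (v := φ)] at hQ ⊢
    exact mem_totalDegreeLE_of_isUnit_mul hv nodal_monic hQ

theorem totalDegree_pos_of_not_isUnit {K σ : Type*} [Field K] {p : MvPolynomial σ K} (hp0 : p ≠ 0)
    (hp : ¬IsUnit p) : 0 < p.totalDegree := by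
  refine Nat.pos_of_ne_zero fun h => hp ?_
  rw [totalDegree_eq_zero_iff_eq_C] at h
  rw [h] at hp0 ⊢
  exact (isUnit_iff_ne_zero.2 fun h0 => hp0 (by rw [h0, map_zero])).map C

open Polynomial.Bivariate in
theorem exists_nodal_mem_totalDegreeLE_of_not_irreducible {K ι : Type*} [Field K] [Fintype ι]
    [DecidableEq ι] [Nonempty ι] {φ : ι → K⟦X⟧} {p : MvPolynomial (Fin 2) K}
    (hp : toSeries ((equivMvPolynomial K).symm p) = nodal Finset.univ φ)
    (hdeg : p.totalDegree ≤ Fintype.card ι) (hred : ¬Irreducible p) :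
    ∃ t : Finset ι, t.Nonempty ∧ tᶜ.Nonempty ∧
      nodal t φ ∈ totalDegreeLE K t.card ∧ nodal tᶜ φ ∈ totalDegreeLE K tᶜ.card := by
  have hp0 : p ≠ 0 := by
    rintro rfl
    exact (nodal_monic (s := Finset.univ) (v := φ)).ne_zero (by rw [← hp, map_zero, map_zero])
  have hpunit : ¬IsUnit p := fun h => by
    have h1 := (nodal_monic (s := Finset.univ) (v := φ)).eq_one_of_isUnit
      (hp ▸ (h.map (equivMvPolynomial K).symm).map toSeries)
    have h2 := natDegree_nodal (s := Finset.univ) (v := φ)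
    rw [h1, Polynomial.natDegree_one, Finset.card_univ] at h2
    exact Fintype.card_ne_zero h2.symm
  obtain ⟨A, B, rfl, hA, hB⟩ : ∃ A B, p = A * B ∧ ¬IsUnit A ∧ ¬IsUnit B := by
    simpa [irreducible_iff, hpunit] using hred
  obtain ⟨hA0, hB0⟩ := mul_ne_zero_iff.1 hp0
  obtain ⟨t, ht, htc, h⟩ := exists_nodal_mem_totalDegreeLE
    ((map_mul toSeries _ _).symm.trans (by rw [← map_mul, hp]))
    (toSeries_equivMvPolynomial_symm_mem_totalDegreeLE A)
    (toSeries_equivMvPolynomial_symm_mem_totalDegreeLE B)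
    ((totalDegree_mul_of_isDomain hA0 hB0).symm.trans_le hdeg)
  exact ⟨t, Finset.card_pos.1 (ht ▸ totalDegree_pos_of_not_isUnit hA0 hA),
    Finset.card_pos.1 (htc ▸ totalDegree_pos_of_not_isUnit hB0 hB), h⟩

end Splitting

section GenericLine

variable {K : Type*} [Field K] {n : ℕ} {f : MvPolynomial (Option (Fin n)) K}

theorem coeff_totalDegree_genericLine (hH : SatisfiesHypH f) :
    (genericLine f).coeff f.totalDegree = 1 := by
  have hconst := Polynomial.eq_C_of_natDegree_le_zero (Polynomial.natDegree_le_iff_coeff_eq_zero.2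
    fun k hk => toSeries_mem_totalDegreeLE.1 (toSeries_genericLine_mem_totalDegreeLE f)
      f.totalDegree k (by lia))
  have hmonic := hH.1.coeff_natDegree
  rw [hH.2.1, ← map_evalRingHom_one_genericLine, Polynomial.coeff_map, hconst,
    Polynomial.coe_evalRingHom, Polynomial.eval_C] at hmonic
  rw [hconst, hmonic, Polynomial.C_1]

theorem natDegree_genericLine (hH : SatisfiesHypH f) :
    (genericLine f).natDegree = f.totalDegree := by
  refine Polynomial.natDegree_eq_of_le_of_coeff_ne_zero ?_
    (by rw [coeff_totalDegree_genericLine hH]; exact one_ne_zero)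
  refine Polynomial.natDegree_le_iff_coeff_eq_zero.2 fun j hj => Polynomial.ext fun k => ?_
  exact toSeries_mem_totalDegreeLE.1 (toSeries_genericLine_mem_totalDegreeLE f) j k (by lia)

theorem monic_genericLine (hH : SatisfiesHypH f) : (genericLine f).Monic :=
  Polynomial.monic_of_natDegree_le_of_coeff_eq_one _ (natDegree_genericLine hH).le
    (coeff_totalDegree_genericLine hH)

theorem irreducible_genericLine (hirr : Irreducible f) (hH : SatisfiesHypH f) :
    Irreducible (genericLine f) := by
  refine (monic_genericLine hH).irreducible_of_irreducible_map (Polynomial.evalRingHom 1) _ ?_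
  rw [map_evalRingHom_one_genericLine]
  exact (MulEquiv.irreducible_iff (optionEquivLeft K (Fin n))).2 hirr

theorem monic_atZero (hH : SatisfiesHypH f) : (atZero f).Monic :=
  Polynomial.monic_of_injective (C_injective (Fin n) K) <|
    map_constantCoeff_toSeries_genericLine f ▸ ((monic_genericLine hH).map _).map _

theorem natDegree_atZero (hH : SatisfiesHypH f) : (atZero f).natDegree = f.totalDegree := by
  have hmonic : (toSeries (genericLine f)).Monic := (monic_genericLine hH).map _
  rw [← Polynomial.natDegree_map_eq_of_injective (C_injective (Fin n) K),
    ← map_constantCoeff_toSeries_genericLine, hmonic.natDegree_map,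
    ← natDegree_genericLine hH]
  exact (monic_genericLine hH).natDegree_map _

theorem separable_atZero (hH : SatisfiesHypH f) : (atZero f).Separable :=
  isCoprime_of_resultant_ne_zero (monic_atZero hH).ne_zero (atZero_pderiv f ▸ hH.2.2)

theorem exists_finset_atZero_eq_nodal (hH : SatisfiesHypH f) (hsplit : (atZero f).Splits) :
    ∃ s : Finset K, s.card = f.totalDegree ∧
      atZero f = nodal Finset.univ ((↑) : s → K) := by
  obtain ⟨s, hs⟩ := Polynomial.exists_finset_of_splits (RingHom.id K) (separable_atZero hH)
    (by rwa [Polynomial.map_id])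
  rw [Polynomial.map_id, monic_atZero hH, map_one, map_one, one_mul] at hs
  exact ⟨s, by rw [← natDegree_atZero hH, hs, Polynomial.natDegree_finsetProd_X_sub_C_eq_card],
    hs.trans (Finset.prod_coe_sort s _).symm⟩

theorem exists_branches (hH : SatisfiesHypH f) (hsplit : (atZero f).Splits) :
    ∃ (s : Finset K) (φ : s → (MvPolynomial (Fin n) K)⟦X⟧), s.card = f.totalDegree ∧
      toSeries (genericLine f) = nodal Finset.univ φ ∧
      ∀ i, PowerSeries.constantCoeff (φ i) = C i.1 := by
  obtain ⟨s, hcard, hs⟩ := exists_finset_atZero_eq_nodal hH hsplit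
  obtain ⟨φ, hφ, hφc⟩ := exists_eq_nodal (F := toSeries (genericLine f))
    (a := fun i : s => C i.1) ((monic_genericLine hH).map _)
    (by rw [map_constantCoeff_toSeries_genericLine, hs, map_nodal, Function.comp_def])
    fun i j hij => by
      beta_reduce
      rw [← map_sub]
      exact (isUnit_iff_ne_zero.2 (sub_ne_zero.2 (Subtype.coe_ne_coe.2 hij))).map C
  exact ⟨s, φ, hcard, hφ, hφc⟩

theorem exists_constantCoeff_eval_derivative_eq_C (hH : SatisfiesHypH f)
    {φ : (MvPolynomial (Fin n) K)⟦X⟧} {c : K} (hφ : (toSeries (genericLine f)).eval φ = 0)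
    (hc : PowerSeries.constantCoeff φ = C c) :
    ∃ r : K, r ≠ 0 ∧
      PowerSeries.constantCoeff ((toSeries (genericLine f)).derivative.eval φ) = C r := by
  have hroot : (atZero f).eval c = 0 := by
    have h := congrArg PowerSeries.constantCoeff hφ
    rwa [constantCoeff_eval, map_constantCoeff_toSeries_genericLine, hc, Polynomial.eval_map_apply,
      map_zero, C_eq_zero] at h
  refine ⟨(atZero f).derivative.eval c,
    (separable_atZero hH).eval₂_derivative_ne_zero (RingHom.id K) hroot, ?_⟩
  rw [constantCoeff_eval, ← Polynomial.derivative_map, map_constantCoeff_toSeries_genericLine,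
    Polynomial.derivative_map, hc, Polynomial.eval_map_apply]

end GenericLine

section Covering

variable {K : Type*} [Field K] {n : ℕ} {f : MvPolynomial (Option (Fin n)) K}

theorem exists_ne_zero_mem_obstructions_nodal {ι : Type*} [Fintype ι] [DecidableEq ι]
    {φ : ι → (MvPolynomial (Fin n) K)⟦X⟧} {c : ι → K} (hirr : Irreducible f)
    (hH : SatisfiesHypH f)
    (hchar : ∀ k, 2 * f.totalDegree ≤ k → k ≤ f.totalDegree * (f.totalDegree - 1) → (k : K) ≠ 0)
    (hφ : toSeries (genericLine f) = nodal Finset.univ φ)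
    (hφc : ∀ i, PowerSeries.constantCoeff (φ i) = C (c i))
    {t : Finset ι} (ht : t.Nonempty) (htc : tᶜ.Nonempty) :
    ∃ q ∈ obstructions f.totalDegree (nodal t φ) (nodal tᶜ φ),
      q ≠ 0 ∧ q.totalDegree ≤ 2 * f.totalDegree - 1 := by
  have hroot (i) : (toSeries (genericLine f)).eval (φ i) = 0 :=
    hφ ▸ Lagrange.eval_nodal_at_node (Finset.mem_univ i)
  choose r hr0 hr using fun i => exists_constantCoeff_eval_derivative_eq_C hH (hroot i) (hφc i)
  have hderiv (i) :
      PowerSeries.constantCoeff ((toSeries (genericLine f)).derivative.eval (φ i)) ≠ 0 := by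
    rw [hr, Ne, C_eq_zero]
    exact hr0 i
  have hφmem (i) : φ i ∈ weightedSubring (Fin n) K :=
    mem_weightedSubring_of_eval_eq_zero (toSeries_genericLine_mem_weightedPolynomials f) (hroot i)
      (hφc i) (hr i) (isUnit_iff_ne_zero.2 (hr0 i))
  obtain ⟨i, hi⟩ := ht
  obtain ⟨j, hj⟩ := htc
  have hd := natDegree_genericLine hH
  obtain ⟨q, hq, hq0⟩ := exists_ne_zero_mem_obstructions (monic_genericLine hH)
    (irreducible_genericLine hirr hH) (hd ▸ toSeries_genericLine_mem_totalDegreeLE f)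
    (hφ.trans (Finset.prod_mul_prod_compl t _).symm) (Lagrange.eval_nodal_at_node hi)
    (Lagrange.eval_nodal_at_node hj) (hderiv i) (hderiv j) fun k hk hk' => by
      rw [hd] at hk hk'
      rw [← map_natCast (C : K →+* _), Ne, C_eq_zero]
      exact hchar k hk hk'
  rw [hd] at hq
  exact ⟨q, hq, hq0, totalDegree_le_of_mem_obstructions
    (nodal_mem_weightedPolynomials hφmem t) (nodal_mem_weightedPolynomials hφmem tᶜ) hq⟩

open Polynomial.Bivariate in
theorem exists_forall_mem_obstructions_eval_eq_zero {ι : Type*} [Fintype ι] [DecidableEq ι]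
    {φ : ι → (MvPolynomial (Fin n) K)⟦X⟧} (hcard : Fintype.card ι = f.totalDegree)
    (hφ : toSeries (genericLine f) = nodal Finset.univ φ) {a : Fin n → K}
    (ha : ¬Irreducible (restrictLine a f)) (i₀ : ι) :
    ∃ t : Finset ι, t.Nonempty ∧ i₀ ∉ t ∧
      ∀ c ∈ obstructions f.totalDegree (nodal t φ) (nodal tᶜ φ), eval a c = 0 := by
  have hspec : toSeries ((equivMvPolynomial K).symm (restrictLine a f)) =
      nodal Finset.univ (PowerSeries.map (eval a) ∘ φ) := by
    rw [← map_eval_toSeries_genericLine, hφ, map_nodal]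
  have : Nonempty ι := ⟨i₀⟩
  obtain ⟨t, ht, htc, hPt, hPtc⟩ := exists_nodal_mem_totalDegreeLE_of_not_irreducible hspec
    ((totalDegree_restrictLine_le a f).trans_eq hcard.symm) ha
  have hzero {t : Finset ι} (ht : t.Nonempty)
      (hP : nodal t (PowerSeries.map (eval a) ∘ φ) ∈ totalDegreeLE K t.card)
      (hQ : nodal tᶜ (PowerSeries.map (eval a) ∘ φ) ∈ totalDegreeLE K tᶜ.card) :
      ∀ c ∈ obstructions f.totalDegree (nodal t φ) (nodal tᶜ φ), eval a c = 0 := by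
    intro c hc
    have hc' := map_mem_obstructions (eval a) hc
    rw [map_nodal, map_nodal, ← hcard, ← t.card_add_card_compl] at hc'
    exact eq_zero_of_mem_obstructions ht.card_pos hP hQ hc'
  by_cases hi₀ : i₀ ∈ t
  · exact ⟨tᶜ, htc, by simpa using hi₀, hzero htc hPtc (by rwa [compl_compl])⟩
  · exact ⟨t, ht, hi₀, hzero ht hPt hPtc⟩

theorem card_nonempty_finset_notMem {ι : Type*} [Fintype ι] [DecidableEq ι] (i₀ : ι) :
    Fintype.card {t : Finset ι // t.Nonempty ∧ i₀ ∉ t} = 2 ^ (Fintype.card ι - 1) - 1 := by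
  rw [Fintype.card_of_subtype ((Finset.univ.erase i₀).powerset.erase ∅)]
  · rw [Finset.card_erase_of_mem (Finset.empty_mem_powerset _), Finset.card_powerset,
      Finset.card_erase_of_mem (Finset.mem_univ i₀), Finset.card_univ]
  · intro t
    simp [Finset.nonempty_iff_ne_empty, Finset.subset_erase]

theorem natCast_ne_zero_of_lt_ringChar {R : Type*} [NonAssocSemiring R] {M k : ℕ}
    (hchar : ringChar R = 0 ∨ M < ringChar R) (hk0 : 0 < k) (hk : k ≤ M) : (k : R) ≠ 0 := by
  rw [Ne, ringChar.spec]
  rcases hchar with h | h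
  · rw [h, zero_dvd_iff]
    exact hk0.ne'
  · exact fun hdvd => (Nat.le_of_dvd hk0 hdvd).not_gt (hk.trans_lt h)

end Covering

end Bertini

theorem bertinian_bad_points_covered_general {K : Type*} [Field K] {n : ℕ}
    (f : MvPolynomial (Option (Fin n)) K) (hirr : Irreducible f) (hH : SatisfiesHypH f)
    (hsplit : (atZero f).Splits)
    (hchar : ∀ k, 2 * f.totalDegree ≤ k → k ≤ f.totalDegree * (f.totalDegree - 1) → (k : K) ≠ 0) :
    ∃ Q : Fin (2 ^ (f.totalDegree - 1) - 1) → MvPolynomial (Fin n) K,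
      (∀ i, Q i ≠ 0 ∧ (Q i).totalDegree ≤ 2 * f.totalDegree - 1) ∧
      ∀ a : Fin n → K, ¬Irreducible (restrictLine a f) → ∃ i, eval a (Q i) = 0 := by
  classical
  obtain ⟨s, φ, hcard, hφ, hφc⟩ := Bertini.exists_branches hH hsplit
  rw [← Fintype.card_coe] at hcard
  have hd : 0 < f.totalDegree := Bertini.totalDegree_pos_of_not_isUnit hirr.ne_zero hirr.not_isUnit
  obtain ⟨i₀⟩ : Nonempty s := Fintype.card_pos_iff.1 (hcard ▸ hd)
  have hobs (t : {t : Finset s // t.Nonempty ∧ i₀ ∉ t}) :=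
    Bertini.exists_ne_zero_mem_obstructions_nodal hirr hH hchar hφ hφc t.2.1
      ⟨i₀, Finset.mem_compl.2 t.2.2⟩
  choose q hqmem hq using hobs
  let e := Fintype.equivFinOfCardEq
    ((Bertini.card_nonempty_finset_notMem i₀).trans (by rw [hcard]))
  refine ⟨q ∘ e.symm, fun i => hq _, fun a ha => ?_⟩
  obtain ⟨t, ht, hi₀, hzero⟩ := Bertini.exists_forall_mem_obstructions_eval_eq_zero hcard hφ ha i₀
  refine ⟨e ⟨t, ht, hi₀⟩, ?_⟩
  rw [Function.comp_apply, Equiv.symm_apply_apply]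
  exact hzero _ (hqmem ⟨t, ht, hi₀⟩)

/-- **Covering the Bertinian bad points by few polynomials of degree `O(d)`.**
Let `d ≥ 1` and let `K` be an algebraically closed field whose characteristic is zero or
greater than `d(d−1)`. Let `f ∈ K[x₁,…,xₙ,y]` be irreducible of total degree `d`,
satisfying Hypothesis (H), and set `m = 2^(d−1) − 1`. Then there are nonzero polynomials
`Q₁,…,Q_m ∈ K[z₁,…,zₙ]` of total degree at most `2d−1` such that every Bertinian bad
point `a ∈ Kⁿ` for `f` (i.e. every `a` for which `f(a₁x,…,aₙx,y)` is not irreducible)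
is a zero of some `Qᵢ`. -/
theorem bertinian_bad_points_covered
    (K : Type) [Field K] [IsAlgClosed K] (n d : ℕ) (hd : 1 ≤ d)
    (hchar : ringChar K = 0 ∨ d * (d - 1) < ringChar K)
    (f : MvPolynomial (Option (Fin n)) K)
    (hirr : Irreducible f) (hdeg : f.totalDegree = d) (hH : SatisfiesHypH f) :
    ∃ Q : Fin (2 ^ (d - 1) - 1) → MvPolynomial (Fin n) K,
      (∀ i, Q i ≠ 0 ∧ (Q i).totalDegree ≤ 2 * d - 1) ∧
      ∀ a : Fin n → K, ¬ Irreducible (restrictLine a f) →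
        ∃ i, eval a (Q i) = 0 := by
  subst hdeg
  exact bertinian_bad_points_covered_general f hirr hH (IsAlgClosed.splits _) fun k hk hk' =>
    Bertini.natCast_ne_zero_of_lt_ringChar hchar (by lia) hk'
end
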